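/- arXiv:2402.15503 — 2 statements merged into one kernel-verified Lean document; each statement's English description precedes it below -/
import Mathlib

section
/- Let Ω ⊆ ℂ be a nonempty open connected set, z₀ a frontier point of Ω, and u : ℂ → ℂ holomorphic on Ω and nonconstant on Ω. Let W be an open neighborhood of z₀ and ũ : ℂ → ℂ a function that is C^∞ on W, agrees with u on W ∩ Ω, and satisfies ũ(z₀) = 0. Then the following are equivalent: (1) ũ vanishes to infinite order at z₀ in the L² sense; (2) for every open neighborhood U ⊆ W of z₀ and every constant C, the bound |∂̄ũ(z)| ≤ C·|ũ(z)| fails at some point z ∈ U; (3) for every open neighborhood U ⊆ W of z₀, the lower Lebesgue integral ∫_U |∂̄ũ(z)|²/|ũ(z)|² dv is infinite. -/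
/-!
Multiplying `ut` by a cutoff gives a smooth function `F` on the whole plane that equals `ut` near
`z₀`. Since `u` is holomorphic on `Ω` and `z₀` lies in the closure of `Ω`, all derivatives of `∂̄F`
vanish at `z₀`: the function `∂̄F` is *flat* there. Hence the Taylor series of `F` at `z₀` only
involves powers of `z - z₀`, and either `F` is flat at `z₀` or `F ~ c (z - z₀)^k` with `c ≠ 0`.

In the second case `|F|` is bounded below by a multiple of `|z - z₀|^k` near `z₀`, while
`∂̄F = O(|z - z₀|^k)`. So `|∂̄F| / |F|` is bounded near `z₀`, and all three conditions fail.

In the first case (1) is immediate, and (2) follows from (3) because a bounded quotient is square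
integrable on a small disc. The heart of the matter is (3), a form of strong unique continuation: if
`|∂̄F|² ≤ q |F|²` with `q` integrable near `z₀`, then `F` vanishes near `z₀`, which contradicts the
identity theorem for `u`. For every `N` the function `v = F / (z - z₀)^N` is smooth and satisfies
the same inequality. Therefore `log (|v|² + s)` is subharmonic up to an error controlled by `q`,
uniformly in `N` and `s > 0`. Pair it with a radial function `η` about a point `z₁` where `F` does
not vanish, such that `∂∂̄η` is the difference of an outer and an inner positive weight of equal
mass: this bounds an inner mean by an outer one up to such an error. In the limit `s → 0`, a lower
bound `κ` of `|v|` on the inner annulus and an upper bound `M` on the outer one satisfy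
`κ² ≤ C M²`, where `C` does not depend on `N`. If `z₀` lies well inside the hole of the outer
annulus, then the factor `(z - z₀)^(-N)` makes `κ / M` grow geometrically in `N`, which is
impossible.
-/

open MeasureTheory

/-- The Wirtinger derivative `∂̄u(z) = (D(1) + i·D(i))/2`, where `D = fderiv ℝ u z`. -/
noncomputable def wirtingerDBar (f : ℂ → ℂ) (z : ℂ) : ℂ :=
  (fderiv ℝ f z 1 + Complex.I * fderiv ℝ f z Complex.I) / 2

/-- `f` vanishes to infinite order at `z₀` in the `L²` sense. -/
def VanishesInfiniteOrder (f : ℂ → ℂ) (z₀ : ℂ) : Prop :=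
  ∀ m : ℝ, 0 ≤ m →
    Filter.Tendsto (fun r : ℝ => r ^ (-m) * ∫ z in Metric.ball z₀ r, ‖f z‖ ^ 2)
      (nhdsWithin 0 (Set.Ioi 0)) (nhds 0)

open Filter Topology Complex Metric
open scoped ContDiff ComplexConjugate Asymptotics

/-! ### First-order operators and Wirtinger derivatives -/

section FirstOrderOperators

variable {E : Type*} [NormedAddCommGroup E] [NormedSpace ℝ E] (L : (E →L[ℝ] ℂ) →L[ℂ] ℂ)
  {f g : E → ℂ} {x : E}

lemma clm_fderiv_add (hf : DifferentiableAt ℝ f x) (hg : DifferentiableAt ℝ g x) :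
    L (fderiv ℝ (fun y ↦ f y + g y) x) = L (fderiv ℝ f x) + L (fderiv ℝ g x) := by
  rw [fderiv_fun_add hf hg, map_add]

lemma clm_fderiv_sub (hf : DifferentiableAt ℝ f x) (hg : DifferentiableAt ℝ g x) :
    L (fderiv ℝ (fun y ↦ f y - g y) x) = L (fderiv ℝ f x) - L (fderiv ℝ g x) := by
  rw [fderiv_fun_sub hf hg, map_sub]

lemma clm_fderiv_mul (hf : DifferentiableAt ℝ f x) (hg : DifferentiableAt ℝ g x) :
    L (fderiv ℝ (fun y ↦ f y * g y) x) = L (fderiv ℝ f x) * g x + f x * L (fderiv ℝ g x) := by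
  rw [fderiv_fun_mul hf hg, map_add, map_smul, map_smul, smul_eq_mul, smul_eq_mul]
  ring

lemma clm_fderiv_inv (hf : DifferentiableAt ℝ f x) (hx : f x ≠ 0) :
    L (fderiv ℝ (fun y ↦ (f y)⁻¹) x) = -L (fderiv ℝ f x) / f x ^ 2 := by
  have hinv : HasFDerivAt (fun y ↦ (f y)⁻¹) (-(f x ^ 2)⁻¹ • fderiv ℝ f x) x :=
    (hasDerivAt_inv hx).comp_hasFDerivAt_of_eq x hf.hasFDerivAt rfl
  rw [hinv.fderiv, map_smul, smul_eq_mul]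
  ring

lemma clm_fderiv_ofReal_comp {φ : ℝ → ℝ} {φ' : ℝ} {r : E → ℝ} (hφ : HasDerivAt φ φ' (r x))
    (hr : DifferentiableAt ℝ r x) :
    L (fderiv ℝ (fun y ↦ (φ (r y) : ℂ)) x) = φ' * L (fderiv ℝ (fun y ↦ (r y : ℂ)) x) := by
  have hcomp : HasFDerivAt (fun y ↦ (φ (r y) : ℂ))
      ((φ' : ℂ) • (ofRealCLM ∘L fderiv ℝ r x)) x := by
    refine (ofRealCLM.hasFDerivAt.comp x (hφ.comp_hasFDerivAt x hr.hasFDerivAt)).congr_fderiv ?_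
    ext w
    simp
  have hreal : HasFDerivAt (fun y ↦ (r y : ℂ)) (ofRealCLM ∘L fderiv ℝ r x) x :=
    ofRealCLM.hasFDerivAt.comp x hr.hasFDerivAt
  rw [hcomp.fderiv, hreal.fderiv, map_smul, smul_eq_mul]

lemma contDiff_clm_fderiv {n m : ℕ∞ω} (hf : ContDiff ℝ n f) (h : m + 1 ≤ n) :
    ContDiff ℝ m (fun x ↦ L (fderiv ℝ f x)) :=
  (L.restrictScalars ℝ).contDiff.comp (hf.fderiv_right h)

lemma integral_mul_clm_fderiv [FiniteDimensional ℝ E] [MeasurableSpace E] [BorelSpace E]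
    {μ : Measure E} [μ.IsAddHaarMeasure] (hf : ContDiff ℝ 1 f) (hg : ContDiff ℝ 1 g)
    (hc : HasCompactSupport g) :
    ∫ y, f y * L (fderiv ℝ g y) ∂μ = -∫ y, L (fderiv ℝ f y) * g y ∂μ := by
  have hf' := hf.continuous_fderiv one_ne_zero
  have hg' := hg.continuous_fderiv one_ne_zero
  have hfg' : Integrable (fun y ↦ f y • fderiv ℝ g y) μ :=
    (hf.continuous.smul hg').integrable_of_hasCompactSupport
      (HasCompactSupport.smul_left (f := f) (hc.fderiv ℝ))
  have hf'g : Integrable (fun y ↦ g y • fderiv ℝ f y) μ :=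
    (hg.continuous.smul hf').integrable_of_hasCompactSupport hc.smul_right
  have hfg : Integrable (fun y ↦ f y * g y) μ :=
    (hf.continuous.mul hg.continuous).integrable_of_hasCompactSupport hc.mul_left
  have hparts : ∫ y, f y • fderiv ℝ g y ∂μ = -∫ y, g y • fderiv ℝ f y ∂μ := by
    ext w
    rw [neg_apply, ContinuousLinearMap.integral_apply hfg',
      ContinuousLinearMap.integral_apply hf'g]
    simp only [smul_apply, smul_eq_mul, mul_comm (g _)]
    refine integral_mul_fderiv_eq_neg_fderiv_mul_of_integrable ?_ (hfg'.apply_continuousLinearMap w)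
      hfg (fun y _ ↦ hf.differentiable one_ne_zero y) fun y _ ↦ hg.differentiable one_ne_zero y
    simpa [mul_comm] using hf'g.apply_continuousLinearMap w
  have h := congrArg L hparts
  rw [map_neg, ← L.integral_comp_comm hfg', ← L.integral_comp_comm hf'g] at h
  simpa [mul_comm] using h

end FirstOrderOperators

/-- The Wirtinger derivative `∂u(z) = (D(1) - i·D(i))/2`, where `D = fderiv ℝ u z`. -/
noncomputable def wirtingerD (f : ℂ → ℂ) (z : ℂ) : ℂ :=
  (fderiv ℝ f z 1 - I * fderiv ℝ f z I) / 2

/-- The functional through which the operator `∂` factors: `wirtingerD f z` is its value at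
`fderiv ℝ f z`. -/
noncomputable def wirtingerDCLM : (ℂ →L[ℝ] ℂ) →L[ℂ] ℂ where
  toFun T := (T 1 - I * T I) / 2
  map_add' S T := by simp only [add_apply]; ring
  map_smul' c T := by simp only [smul_apply, smul_eq_mul, RingHom.id_apply]; ring
  cont := by fun_prop

/-- The functional through which the operator `∂̄` factors: `wirtingerDBar f z` is its value at
`fderiv ℝ f z`. -/
noncomputable def wirtingerDBarCLM : (ℂ →L[ℝ] ℂ) →L[ℂ] ℂ where
  toFun T := (T 1 + I * T I) / 2
  map_add' S T := by simp only [add_apply]; ring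
  map_smul' c T := by simp only [smul_apply, smul_eq_mul, RingHom.id_apply]; ring
  cont := by fun_prop

lemma wirtingerDCLM_apply (T : ℂ →L[ℝ] ℂ) : wirtingerDCLM T = (T 1 - I * T I) / 2 :=
  rfl

lemma wirtingerDBarCLM_apply (T : ℂ →L[ℝ] ℂ) : wirtingerDBarCLM T = (T 1 + I * T I) / 2 :=
  rfl

lemma wirtingerD_eq_clm (f : ℂ → ℂ) : wirtingerD f = fun z ↦ wirtingerDCLM (fderiv ℝ f z) :=
  rfl

lemma wirtingerDBar_eq_clm (f : ℂ → ℂ) :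
    wirtingerDBar f = fun z ↦ wirtingerDBarCLM (fderiv ℝ f z) :=
  rfl

section WirtingerCalculus

variable {f g : ℂ → ℂ} {r : ℂ → ℝ} {z : ℂ} {n m : ℕ∞ω}

lemma contDiff_wirtingerD (hf : ContDiff ℝ n f) (h : m + 1 ≤ n) : ContDiff ℝ m (wirtingerD f) :=
  contDiff_clm_fderiv wirtingerDCLM hf h

lemma contDiff_wirtingerDBar (hf : ContDiff ℝ n f) (h : m + 1 ≤ n) :
    ContDiff ℝ m (wirtingerDBar f) :=
  contDiff_clm_fderiv wirtingerDBarCLM hf h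

lemma hasCompactSupport_wirtingerD (hc : HasCompactSupport f) :
    HasCompactSupport (wirtingerD f) :=
  (hc.fderiv ℝ).comp_left (map_zero wirtingerDCLM)

lemma hasCompactSupport_wirtingerDBar (hc : HasCompactSupport f) :
    HasCompactSupport (wirtingerDBar f) :=
  (hc.fderiv ℝ).comp_left (map_zero wirtingerDBarCLM)

lemma tsupport_wirtingerDBar_subset : tsupport (wirtingerDBar f) ⊆ tsupport f :=
  (tsupport_comp_subset (map_zero wirtingerDBarCLM) (fderiv ℝ f)).trans (tsupport_fderiv_subset ℝ)

lemma eventuallyEq_wirtingerDBar (h : f =ᶠ[𝓝 z] g) :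
    wirtingerDBar f =ᶠ[𝓝 z] wirtingerDBar g :=
  h.fderiv.fun_comp wirtingerDBarCLM

lemma wirtingerDBar_add (hf : DifferentiableAt ℝ f z) (hg : DifferentiableAt ℝ g z) :
    wirtingerDBar (fun w ↦ f w + g w) z = wirtingerDBar f z + wirtingerDBar g z :=
  clm_fderiv_add wirtingerDBarCLM hf hg

lemma wirtingerD_sub (hf : DifferentiableAt ℝ f z) (hg : DifferentiableAt ℝ g z) :
    wirtingerD (fun w ↦ f w - g w) z = wirtingerD f z - wirtingerD g z :=
  clm_fderiv_sub wirtingerDCLM hf hg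

lemma wirtingerDBar_sub (hf : DifferentiableAt ℝ f z) (hg : DifferentiableAt ℝ g z) :
    wirtingerDBar (fun w ↦ f w - g w) z = wirtingerDBar f z - wirtingerDBar g z :=
  clm_fderiv_sub wirtingerDBarCLM hf hg

lemma wirtingerD_mul (hf : DifferentiableAt ℝ f z) (hg : DifferentiableAt ℝ g z) :
    wirtingerD (fun w ↦ f w * g w) z = wirtingerD f z * g z + f z * wirtingerD g z :=
  clm_fderiv_mul wirtingerDCLM hf hg

lemma wirtingerDBar_mul (hf : DifferentiableAt ℝ f z) (hg : DifferentiableAt ℝ g z) :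
    wirtingerDBar (fun w ↦ f w * g w) z = wirtingerDBar f z * g z + f z * wirtingerDBar g z :=
  clm_fderiv_mul wirtingerDBarCLM hf hg

lemma wirtingerDBar_inv (hf : DifferentiableAt ℝ f z) (hz : f z ≠ 0) :
    wirtingerDBar (fun w ↦ (f w)⁻¹) z = -wirtingerDBar f z / f z ^ 2 :=
  clm_fderiv_inv wirtingerDBarCLM hf hz

lemma wirtingerD_ofReal_comp {φ : ℝ → ℝ} {φ' : ℝ} (hφ : HasDerivAt φ φ' (r z))
    (hr : DifferentiableAt ℝ r z) :
    wirtingerD (fun w ↦ (φ (r w) : ℂ)) z = φ' * wirtingerD (fun w ↦ (r w : ℂ)) z :=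
  clm_fderiv_ofReal_comp wirtingerDCLM hφ hr

lemma integral_mul_wirtingerD (hf : ContDiff ℝ 1 f) (hg : ContDiff ℝ 1 g)
    (hc : HasCompactSupport g) :
    ∫ z, f z * wirtingerD g z = -∫ z, wirtingerD f z * g z :=
  integral_mul_clm_fderiv wirtingerDCLM hf hg hc

lemma integral_mul_wirtingerDBar (hf : ContDiff ℝ 1 f) (hg : ContDiff ℝ 1 g)
    (hc : HasCompactSupport g) :
    ∫ z, f z * wirtingerDBar g z = -∫ z, wirtingerDBar f z * g z :=
  integral_mul_clm_fderiv wirtingerDBarCLM hf hg hc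

lemma integral_mul_wirtingerD_wirtingerDBar (hf : ContDiff ℝ 2 f) (hg : ContDiff ℝ 2 g)
    (hc : HasCompactSupport g) :
    ∫ z, f z * wirtingerD (wirtingerDBar g) z = ∫ z, wirtingerDBar (wirtingerD f) z * g z := by
  rw [integral_mul_wirtingerD (hf.of_le one_le_two) (contDiff_wirtingerDBar hg (by norm_num))
      (hasCompactSupport_wirtingerDBar hc),
    integral_mul_wirtingerDBar (contDiff_wirtingerD hf (by norm_num)) (hg.of_le one_le_two) hc,
    neg_neg]

lemma wirtingerD_conj (hf : DifferentiableAt ℝ f z) :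
    wirtingerD (fun w ↦ conj (f w)) z = conj (wirtingerDBar f z) := by
  have h : HasFDerivAt (fun w ↦ conj (f w)) ((conjCLE : ℂ →L[ℝ] ℂ) ∘L fderiv ℝ f z) z :=
    (conjCLE : ℂ →L[ℝ] ℂ).hasFDerivAt.comp z hf.hasFDerivAt
  simp [wirtingerD, wirtingerDBar, h.fderiv, sub_eq_add_neg, map_ofNat]

lemma wirtingerDBar_conj (hf : DifferentiableAt ℝ f z) :
    wirtingerDBar (fun w ↦ conj (f w)) z = conj (wirtingerD f z) := by
  have h : HasFDerivAt (fun w ↦ conj (f w)) ((conjCLE : ℂ →L[ℝ] ℂ) ∘L fderiv ℝ f z) z :=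
    (conjCLE : ℂ →L[ℝ] ℂ).hasFDerivAt.comp z hf.hasFDerivAt
  simp [wirtingerD, wirtingerDBar, h.fderiv, map_ofNat]

lemma wirtingerDBar_ofReal (hr : DifferentiableAt ℝ r z) :
    wirtingerDBar (fun w ↦ (r w : ℂ)) z = conj (wirtingerD (fun w ↦ (r w : ℂ)) z) := by
  have hr' : DifferentiableAt ℝ (fun w ↦ (r w : ℂ)) z := ofRealCLM.differentiableAt.comp z hr
  simpa only [conj_ofReal] using wirtingerDBar_conj hr'

lemma wirtingerDBar_eq_zero_of_differentiableAt (hf : DifferentiableAt ℂ f z) :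
    wirtingerDBar f z = 0 := by
  have hI : fderiv ℂ f z I = I * fderiv ℂ f z 1 := by
    simpa only [smul_eq_mul, mul_one] using map_smul (fderiv ℂ f z) I 1
  simp [wirtingerDBar, hf.fderiv_restrictScalars ℝ, hI, ← mul_assoc]

lemma wirtingerD_of_hasDerivAt {f' : ℂ} (hf : HasDerivAt f f' z) : wirtingerD f z = f' := by
  rw [wirtingerD, (hf.hasFDerivAt.restrictScalars ℝ).fderiv]
  simp only [ContinuousLinearMap.coe_restrictScalars', ContinuousLinearMap.toSpanSingleton_apply,
    smul_eq_mul, one_mul, ← mul_assoc, I_mul_I]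
  ring

lemma wirtingerDBar_wirtingerD_comm (hf : ContDiff ℝ 2 f) (z : ℂ) :
    wirtingerDBar (wirtingerD f) z = wirtingerD (wirtingerDBar f) z := by
  have hsymm : IsSymmSndFDerivAt ℝ f z := hf.contDiffAt.isSymmSndFDerivAt (by simp)
  have hf' : DifferentiableAt ℝ (fderiv ℝ f) z :=
    (hf.fderiv_right (m := 1) (by norm_num)).differentiable one_ne_zero z
  have hcomp (L : (ℂ →L[ℝ] ℂ) →L[ℂ] ℂ) : fderiv ℝ (fun w ↦ L (fderiv ℝ f w)) z =
      L.restrictScalars ℝ ∘L fderiv ℝ (fderiv ℝ f) z :=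
    ((L.restrictScalars ℝ).hasFDerivAt.comp z hf'.hasFDerivAt).fderiv
  rw [wirtingerD_eq_clm f, wirtingerDBar_eq_clm f, wirtingerDBar, wirtingerD, hcomp, hcomp]
  simp only [ContinuousLinearMap.comp_apply, ContinuousLinearMap.coe_restrictScalars',
    wirtingerDCLM_apply, wirtingerDBarCLM_apply]
  rw [hsymm I 1]
  ring

lemma fderiv_eq_wirtingerD_add_wirtingerDBar (f : ℂ → ℂ) (z : ℂ) :
    fderiv ℝ f z = wirtingerD f z • ContinuousLinearMap.id ℝ ℂ +
      wirtingerDBar f z • (conjCLE : ℂ →L[ℝ] ℂ) := by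
  ext h
  set T := fderiv ℝ f z
  have hT : T h = h.re * T 1 + h.im * T I := by
    have hre : T (h.re : ℂ) = h.re * T 1 := by simpa using map_smul T h.re (1 : ℂ)
    have him : T (h.im * I) = h.im * T I := by simpa using map_smul T h.im I
    conv_lhs => rw [← re_add_im h, map_add, hre, him]
  have hconj : conj h = h.re - h.im * I := by apply Complex.ext <;> simp
  have hsplit : T h = (T 1 - I * T I) / 2 * h + (T 1 + I * T I) / 2 * conj h := by
    rw [hT, hconj]
    nth_rw 3 [← re_add_im h]
    linear_combination (h.im : ℂ) * T I * I_sq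
  simpa [wirtingerD, wirtingerDBar] using hsplit

end WirtingerCalculus

/-! ### Flat functions -/

section Flat

variable {E F G : Type*} [NormedAddCommGroup E] [NormedSpace ℝ E] [NormedAddCommGroup F]
  [NormedSpace ℝ F] [NormedAddCommGroup G] [NormedSpace ℝ G] {f g : E → F} {x : E}

/-- `f` is flat at `x`: all its derivatives there vanish, including the zeroth one. For a smooth
function this is vanishing to infinite order. -/
def IsFlatAt (f : E → F) (x : E) : Prop :=
  ∀ n : ℕ, iteratedFDeriv ℝ n f x = 0

lemma IsFlatAt.apply_eq_zero (h : IsFlatAt f x) : f x = 0 := by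
  rw [← norm_eq_zero, ← norm_iteratedFDeriv_zero (𝕜 := ℝ), h 0, norm_zero]

lemma IsFlatAt.fderiv (h : IsFlatAt f x) : IsFlatAt (fderiv ℝ f) x := fun n ↦ by
  rw [← norm_eq_zero, norm_iteratedFDeriv_fderiv, h (n + 1), norm_zero]

lemma IsFlatAt.congr (h : IsFlatAt f x) (hfg : f =ᶠ[𝓝 x] g) : IsFlatAt g x := fun n ↦ by
  rw [← (hfg.iteratedFDeriv ℝ n).eq_of_nhds, h n]

lemma iteratedFDeriv_clm_comp_eq_zero {n : ℕ} (h : iteratedFDeriv ℝ n f x = 0)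
    (hf : ContDiff ℝ ∞ f) (L : F →L[ℝ] G) : iteratedFDeriv ℝ n (fun y ↦ L (f y)) x = 0 := by
  have := L.iteratedFDeriv_comp_left (x := x) hf.contDiffAt (i := n) (by exact_mod_cast le_top)
  rw [show (fun y ↦ L (f y)) = L ∘ f from rfl, this, h]
  ext
  simp

lemma IsFlatAt.clm_comp (h : IsFlatAt f x) (hf : ContDiff ℝ ∞ f) (L : F →L[ℝ] G) :
    IsFlatAt (fun y ↦ L (f y)) x := fun n ↦
  iteratedFDeriv_clm_comp_eq_zero (h n) hf L

lemma isBigO_norm_sub_pow_succ_of_fderiv {k : ℕ} (hf : Differentiable ℝ f) (hx : f x = 0)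
    (h : _root_.fderiv ℝ f =O[𝓝 x] fun y ↦ ‖y - x‖ ^ k) :
    f =O[𝓝 x] fun y ↦ ‖y - x‖ ^ (k + 1) := by
  obtain ⟨C, hC, hbound⟩ := h.exists_pos
  obtain ⟨ρ, hρ, hball⟩ := Metric.eventually_nhds_iff_ball.1 hbound.bound
  refine Asymptotics.IsBigO.of_bound C ?_
  filter_upwards [ball_mem_nhds x hρ] with y hy
  have hmean := (convex_closedBall x ‖y - x‖).norm_image_sub_le_of_norm_fderiv_le (𝕜 := ℝ)
    (C := C * ‖y - x‖ ^ k) (x := x) (y := y) (fun w _ ↦ hf w) (fun w hw ↦ ?_) (by simp)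
    (by simp [dist_eq_norm])
  · simpa [hx, pow_succ, mul_assoc] using hmean
  · rw [mem_closedBall_iff_norm] at hw
    rw [mem_ball_iff_norm] at hy
    refine (hball w (mem_ball_iff_norm.2 (hw.trans_lt hy))).trans ?_
    rw [norm_pow, norm_norm]
    gcongr

lemma IsFlatAt.isBigO_iteratedFDeriv (h : IsFlatAt f x) (hf : ContDiff ℝ ∞ f) (k n : ℕ) :
    iteratedFDeriv ℝ n f =O[𝓝 x] fun y ↦ ‖y - x‖ ^ k := by
  induction k generalizing n with
  | zero =>
    have hcont := hf.continuous_iteratedFDeriv (m := n) (by exact_mod_cast le_top)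
    simpa using (hcont.tendsto x).isBigO_one ℝ
  | succ k ih =>
    refine isBigO_norm_sub_pow_succ_of_fderiv
      (hf.differentiable_iteratedFDeriv (by exact_mod_cast ENat.natCast_lt_top n)) (h n) ?_
    refine Asymptotics.IsBigO.of_norm_left ?_
    simpa only [norm_fderiv_iteratedFDeriv] using (ih (n + 1)).norm_left

lemma IsFlatAt.isBigO_norm_sub_pow (h : IsFlatAt f x) (hf : ContDiff ℝ ∞ f) (k : ℕ) :
    f =O[𝓝 x] fun y ↦ ‖y - x‖ ^ k := by
  refine Asymptotics.IsBigO.of_norm_left ?_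
  simpa only [norm_iteratedFDeriv_zero] using (h.isBigO_iteratedFDeriv hf k 0).norm_left

end Flat

section FlatQuotient

variable {F : Type*} [NormedAddCommGroup F] [NormedSpace ℝ F] [NormedSpace ℂ F] {f : ℂ → F} {z₀ : ℂ}

lemma IsFlatAt.isBigO_inv_pow_smul (h : IsFlatAt f z₀) (hf : ContDiff ℝ ∞ f) (N k : ℕ) :
    (fun z ↦ ((z - z₀) ^ N)⁻¹ • f z) =O[𝓝 z₀] fun z ↦ ‖z - z₀‖ ^ k := by
  obtain ⟨C, hC₀, hC⟩ := (h.isBigO_norm_sub_pow hf (N + k)).exists_pos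
  refine Asymptotics.IsBigO.of_bound C ?_
  filter_upwards [hC.bound] with z hz
  rcases eq_or_ne z z₀ with rfl | hne
  · rw [h.apply_eq_zero, smul_zero, norm_zero]
    positivity
  · have hpos : 0 < ‖z - z₀‖ := norm_pos_iff.2 (sub_ne_zero.2 hne)
    rw [norm_smul, norm_inv, norm_pow, inv_mul_le_iff₀ (by positivity)]
    calc ‖f z‖ ≤ C * ‖‖z - z₀‖ ^ (N + k)‖ := hz
      _ = ‖z - z₀‖ ^ N * (C * ‖‖z - z₀‖ ^ k‖) := by simp only [norm_pow, norm_norm]; ring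

lemma hasDerivAt_inv_sub_pow (N : ℕ) {z : ℂ} (hz : z ≠ z₀) :
    HasDerivAt (fun w ↦ ((w - z₀) ^ N)⁻¹) (-N * ((z - z₀) ^ (N + 1))⁻¹) z := by
  have hne := sub_ne_zero.2 hz
  have h := (hasDerivAt_zpow (-N : ℤ) (z - z₀) (Or.inl hne)).comp_sub_const z z₀
  simpa [zpow_sub₀ hne, pow_succ, div_eq_mul_inv, mul_comm] using h

variable [IsScalarTower ℝ ℂ F]

lemma IsFlatAt.hasFDerivAt_inv_pow_smul (h : IsFlatAt f z₀) (hf : ContDiff ℝ ∞ f) (N : ℕ) (z : ℂ) :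
    HasFDerivAt (𝕜 := ℝ) (fun w ↦ ((w - z₀) ^ N)⁻¹ • f w)
      (((z - z₀) ^ N)⁻¹ • _root_.fderiv ℝ f z + ((z - z₀) ^ (N + 1))⁻¹ •
        (-(N : ℂ) • (ContinuousLinearMap.lsmul ℝ ℂ).flip : F →L[ℝ] ℂ →L[ℝ] F) (f z)) z := by
  rcases eq_or_ne z z₀ with rfl | hz
  · simpa [h.apply_eq_zero, h.fderiv.apply_eq_zero] using
      (h.isBigO_inv_pow_smul hf N 2).hasFDerivAt one_lt_two
  · have hpow := (hasDerivAt_inv_sub_pow N hz).hasFDerivAt.restrictScalars ℝ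
    refine (hpow.smul (hf.differentiable (by simp) z).hasFDerivAt).congr_fderiv ?_
    ext w
    simp [smul_smul]
    ring_nf

lemma IsFlatAt.contDiff_inv_pow_smul (h : IsFlatAt f z₀) (hf : ContDiff ℝ ∞ f) (N n : ℕ) :
    ContDiff ℝ n fun z ↦ ((z - z₀) ^ N)⁻¹ • f z := by
  have hderiv := h.hasFDerivAt_inv_pow_smul hf
  induction n generalizing F N with
  | zero => exact contDiff_zero.2 (continuous_iff_continuousAt.2 fun z ↦ (hderiv N z).continuousAt)
  | succ n ih =>
    have hf' : ContDiff ℝ ∞ (_root_.fderiv ℝ f) := hf.fderiv_right (by simp)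
    set T : F →L[ℝ] ℂ →L[ℝ] F := -(N : ℂ) • (ContinuousLinearMap.lsmul ℝ ℂ).flip
    rw [Nat.cast_succ, contDiff_succ_iff_fderiv]
    refine ⟨fun z ↦ (hderiv N z).differentiableAt, by simp, ?_⟩
    rw [funext fun z ↦ (hderiv N z).fderiv]
    exact (ih h.fderiv hf' N (h.fderiv.hasFDerivAt_inv_pow_smul hf')).add
      (ih (h.clm_comp hf T) (T.contDiff.comp hf) (N + 1)
        ((h.clm_comp hf T).hasFDerivAt_inv_pow_smul (T.contDiff.comp hf)))

end FlatQuotient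

/-! ### Leading terms of functions with flat `∂̄`-derivative -/

section LeadingTerm

variable {f : ℂ → ℂ} {z₀ : ℂ}

lemma IsFlatAt.wirtingerDBar_wirtingerD (h : IsFlatAt (wirtingerDBar f) z₀)
    (hf : ContDiff ℝ ∞ f) : IsFlatAt (wirtingerDBar (wirtingerD f)) z₀ := by
  have hB : ContDiff ℝ ∞ (wirtingerDBar f) := contDiff_wirtingerDBar hf (by simp)
  rw [funext (wirtingerDBar_wirtingerD_comm (mod_cast contDiff_infty.1 hf 2))]
  exact h.fderiv.clm_comp (hB.fderiv_right (by simp)) (wirtingerDCLM.restrictScalars ℝ)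

-- All mixed derivatives vanish at `z₀` because one of their factors is `∂̄`, so only the pure
-- derivatives `∂^j f` have to be checked.
lemma isFlatAt_of_iterate_wirtingerD_eq_zero (h : IsFlatAt (wirtingerDBar f) z₀)
    (hf : ContDiff ℝ ∞ f) (hD : ∀ j, (wirtingerD^[j] f) z₀ = 0) : IsFlatAt f z₀ := by
  intro n
  induction n generalizing f with
  | zero => ext; simpa using hD 0
  | succ n ih =>
    have hDf : ContDiff ℝ ∞ (wirtingerD f) := contDiff_wirtingerD hf (by simp)
    have hBf : ContDiff ℝ ∞ (wirtingerDBar f) := contDiff_wirtingerDBar hf (by simp)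
    have hDn : iteratedFDeriv ℝ n (wirtingerD f) z₀ = 0 :=
      ih (h.wirtingerDBar_wirtingerD hf) hDf fun j ↦ hD (j + 1)
    let smulL (T : ℂ →L[ℝ] ℂ) : ℂ →L[ℝ] ℂ →L[ℝ] ℂ := (ContinuousLinearMap.lsmul ℝ ℂ).flip T
    have hsplit : fderiv ℝ f = fun z ↦ smulL (.id ℝ ℂ) (wirtingerD f z) +
        smulL conjCLE (wirtingerDBar f z) := funext (fderiv_eq_wirtingerD_add_wirtingerDBar f)
    rw [← norm_eq_zero, ← norm_iteratedFDeriv_fderiv, norm_eq_zero, hsplit,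
      fun_iteratedFDeriv_add_apply
        (f := fun z ↦ smulL (.id ℝ ℂ) (wirtingerD f z))
        (g := fun z ↦ smulL conjCLE (wirtingerDBar f z))
        (contDiff_infty.1 ((smulL _).contDiff.comp hDf) n).contDiffAt
        (contDiff_infty.1 ((smulL _).contDiff.comp hBf) n).contDiffAt,
      iteratedFDeriv_clm_comp_eq_zero hDn hDf, h.clm_comp hBf _ n, add_zero]

lemma isBigO_norm_sub_pow_succ_of_wirtinger {k : ℕ} (hf : Differentiable ℝ f) (hz₀ : f z₀ = 0)
    (hD : wirtingerD f =O[𝓝 z₀] fun z ↦ ‖z - z₀‖ ^ k)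
    (hB : wirtingerDBar f =O[𝓝 z₀] fun z ↦ ‖z - z₀‖ ^ k) :
    f =O[𝓝 z₀] fun z ↦ ‖z - z₀‖ ^ (k + 1) := by
  refine isBigO_norm_sub_pow_succ_of_fderiv hf hz₀ ?_
  rw [funext (fderiv_eq_wirtingerD_add_wirtingerDBar f)]
  have hsmul (T : ℂ →L[ℝ] ℂ) (g : ℂ → ℂ) : (fun z ↦ g z • T) =O[𝓝 z₀] g :=
    ((ContinuousLinearMap.lsmul ℝ ℂ).flip T).isBigO_comp g _
  exact ((hsmul _ _).trans hD).add ((hsmul _ _).trans hB)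

lemma isBigO_sub_leading_term (k : ℕ) (h : IsFlatAt (wirtingerDBar f) z₀) (hf : ContDiff ℝ ∞ f)
    (hD : ∀ j < k, (wirtingerD^[j] f) z₀ = 0) :
    (fun z ↦ f z - (wirtingerD^[k] f) z₀ / (k.factorial : ℂ) * (z - z₀) ^ k) =O[𝓝 z₀]
      fun z ↦ ‖z - z₀‖ ^ (k + 1) := by
  have hdf : Differentiable ℝ f := hf.differentiable (by simp)
  induction k generalizing f with
  | zero =>
    refine isBigO_norm_sub_pow_succ_of_fderiv (by fun_prop) (by simp) ?_
    simpa [fderiv_sub_const] using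
      ((hf.continuous_fderiv (by simp)).tendsto z₀).isBigO_one ℝ
  | succ k ih =>
    have hDf : ContDiff ℝ ∞ (wirtingerD f) := contDiff_wirtingerD hf (by simp)
    have hBf : ContDiff ℝ ∞ (wirtingerDBar f) := contDiff_wirtingerDBar hf (by simp)
    have hih := ih (h.wirtingerDBar_wirtingerD hf) hDf (fun j hj ↦ hD (j + 1) (by omega))
      (hDf.differentiable (by simp))
    rw [← Function.iterate_succ_apply] at hih
    set c := (wirtingerD^[k + 1] f) z₀
    have hpow (z : ℂ) : HasDerivAt (fun z ↦ c / ((k + 1).factorial : ℂ) * (z - z₀) ^ (k + 1))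
        (c / (k.factorial : ℂ) * (z - z₀) ^ k) z := by
      refine ((((hasDerivAt_id z).sub_const z₀).pow (k + 1)).const_mul _).congr_deriv ?_
      have hk : (k.factorial : ℂ) ≠ 0 := by exact_mod_cast k.factorial_ne_zero
      have hk' : (k : ℂ) + 1 ≠ 0 := by exact_mod_cast k.succ_ne_zero
      rw [Nat.factorial_succ]
      push_cast
      simp only [id]
      field_simp
    have hdpow (z : ℂ) := (hpow z).differentiableAt.restrictScalars ℝ
    refine isBigO_norm_sub_pow_succ_of_wirtinger (by fun_prop) (by simpa using hD 0 (by omega))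
      ?_ ?_
    · rw [funext fun z ↦ (wirtingerD_sub (hdf z) (hdpow z)).trans
        (congrArg _ (wirtingerD_of_hasDerivAt (hpow z)))]
      exact hih
    · rw [funext fun z ↦ (wirtingerDBar_sub (hdf z) (hdpow z)).trans
        (congrArg _ (wirtingerDBar_eq_zero_of_differentiableAt (hpow z).differentiableAt))]
      simpa using h.isBigO_norm_sub_pow hBf (k + 1)

lemma isFlatAt_or_isBigO_sub_leading_term (h : IsFlatAt (wirtingerDBar f) z₀)
    (hf : ContDiff ℝ ∞ f) :
    IsFlatAt f z₀ ∨ ∃ k : ℕ, ∃ c : ℂ, c ≠ 0 ∧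
      (fun z ↦ f z - c * (z - z₀) ^ k) =O[𝓝 z₀] fun z ↦ ‖z - z₀‖ ^ (k + 1) := by
  classical
  by_cases hD : ∀ j, (wirtingerD^[j] f) z₀ = 0
  · exact .inl (isFlatAt_of_iterate_wirtingerD_eq_zero h hf hD)
  · push Not at hD
    refine .inr ⟨Nat.find hD, _, ?_, isBigO_sub_leading_term (Nat.find hD) h hf fun j hj ↦ ?_⟩
    · exact div_ne_zero (Nat.find_spec hD) (by exact_mod_cast Nat.factorial_ne_zero _)
    · simpa using Nat.find_min hD hj

lemma norm_sub_pow_isBigO_of_leading_term {k : ℕ} {c : ℂ} (hc : c ≠ 0)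
    (h : (fun z ↦ f z - c * (z - z₀) ^ k) =O[𝓝 z₀] fun z ↦ ‖z - z₀‖ ^ (k + 1)) :
    (fun z ↦ ‖z - z₀‖ ^ k) =O[𝓝 z₀] f := by
  have hpow : (fun z ↦ ‖z - z₀‖ ^ k) =O[𝓝 z₀] fun z ↦ c * (z - z₀) ^ k := by
    refine Asymptotics.IsBigO.of_bound ‖c‖⁻¹ (.of_forall fun z ↦ ?_)
    have hc' : ‖c‖ ≠ 0 := norm_ne_zero_iff.2 hc
    simp [inv_mul_cancel_left₀ hc']
  have hlim : (fun z : ℂ ↦ ‖z - z₀‖) =o[𝓝 z₀] fun _ ↦ (1 : ℝ) :=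
    (Asymptotics.isLittleO_one_iff ℝ).2 (tendsto_norm_sub_self z₀)
  have hsucc : (fun z ↦ ‖z - z₀‖ ^ (k + 1)) =o[𝓝 z₀] fun z ↦ ‖z - z₀‖ ^ k := by
    simpa only [pow_succ, mul_one] using
      (Asymptotics.isBigO_refl (fun z : ℂ ↦ ‖z - z₀‖ ^ k) _).mul_isLittleO hlim
  have hequiv : f ~[𝓝 z₀] fun z ↦ c * (z - z₀) ^ k :=
    (h.trans_isLittleO hsucc).trans_isBigO hpow
  exact hpow.trans hequiv.isBigO_symm

end LeadingTerm

/-! ### Almost subharmonicity of `log (|v|² + s)` -/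

section LogEstimate

variable {v : ℂ → ℂ} {s : ℝ} {z : ℂ}

/-- The term of `∂ log (|v|² + s) = (∂v v̄ + v (∂̄v)‾) / (|v|² + s)` that vanishes for holomorphic
`v`. -/
noncomputable def wirtingerDLogRemainder (v : ℂ → ℂ) (s : ℝ) (z : ℂ) : ℂ :=
  v z * conj (wirtingerDBar v z) * ((‖v z‖ ^ 2 + s : ℝ) : ℂ)⁻¹

/-- The part of `∂̄∂ log (|v|² + s)` that is not in divergence form. -/
noncomputable def logMainTerm (v : ℂ → ℂ) (s : ℝ) (z : ℂ) : ℝ :=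
  s * (‖wirtingerD v z‖ ^ 2 - ‖wirtingerDBar v z‖ ^ 2) / (‖v z‖ ^ 2 + s) ^ 2

lemma contDiff_norm_sq_add {n : ℕ∞ω} (hv : ContDiff ℝ n v) :
    ContDiff ℝ n fun w ↦ ‖v w‖ ^ 2 + s :=
  (hv.norm_sq ℝ).add contDiff_const

lemma ofReal_norm_sq_add_ne_zero (hs : 0 < s) (w : ℂ) : ((‖w‖ ^ 2 + s : ℝ) : ℂ) ≠ 0 := by
  have hpos : 0 < ‖w‖ ^ 2 + s := by positivity
  exact_mod_cast hpos.ne'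

lemma contDiff_inv_norm_sq_add {n : ℕ∞ω} (hv : ContDiff ℝ n v) (hs : 0 < s) :
    ContDiff ℝ n fun w ↦ ((‖v w‖ ^ 2 + s : ℝ) : ℂ)⁻¹ :=
  (ofRealCLM.contDiff.comp (contDiff_norm_sq_add hv)).inv fun _ ↦ ofReal_norm_sq_add_ne_zero hs _

lemma contDiff_log_norm_sq_add {n : ℕ∞ω} (hv : ContDiff ℝ n v) (hs : 0 < s) :
    ContDiff ℝ n fun w ↦ Real.log (‖v w‖ ^ 2 + s) :=
  (contDiff_norm_sq_add hv).log fun _ ↦ by positivity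

lemma contDiff_wirtingerDLogRemainder (hv : ContDiff ℝ 2 v) (hs : 0 < s) :
    ContDiff ℝ 1 (wirtingerDLogRemainder v s) := by
  have hB : ContDiff ℝ 1 (wirtingerDBar v) := contDiff_wirtingerDBar hv (by norm_num)
  have hv₁ : ContDiff ℝ 1 v := hv.of_le one_le_two
  exact (hv₁.mul ((conjCLE : ℂ →L[ℝ] ℂ).contDiff.comp hB)).mul (contDiff_inv_norm_sq_add hv₁ hs)

lemma wirtingerD_norm_sq_add (hv : DifferentiableAt ℝ v z) :
    wirtingerD (fun w ↦ ((‖v w‖ ^ 2 + s : ℝ) : ℂ)) z =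
      wirtingerD v z * conj (v z) + v z * conj (wirtingerDBar v z) := by
  have hv' : DifferentiableAt ℝ (fun w ↦ conj (v w)) z :=
    (conjCLE : ℂ →L[ℝ] ℂ).differentiableAt.comp z hv
  have hconst : wirtingerD (fun w ↦ ((‖v w‖ ^ 2 + s : ℝ) : ℂ)) z =
      wirtingerD (fun w ↦ v w * conj (v w)) z := by
    simp [wirtingerD, mul_conj, normSq_eq_norm_sq]
  rw [hconst, wirtingerD_mul hv hv', wirtingerD_conj hv]

lemma wirtingerDBar_inv_norm_sq_add (hv : DifferentiableAt ℝ v z) (hs : 0 < s) :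
    wirtingerDBar (fun w ↦ ((‖v w‖ ^ 2 + s : ℝ) : ℂ)⁻¹) z =
      -(wirtingerDBar v z * conj (v z) + v z * conj (wirtingerD v z)) /
        ((‖v z‖ ^ 2 + s : ℝ) : ℂ) ^ 2 := by
  have hr : DifferentiableAt ℝ (fun w ↦ ‖v w‖ ^ 2 + s) z := (hv.norm_sq ℝ).add_const s
  have hr' : DifferentiableAt ℝ (fun w ↦ ((‖v w‖ ^ 2 + s : ℝ) : ℂ)) z :=
    ofRealCLM.differentiableAt.comp z hr
  rw [wirtingerDBar_inv hr' (ofReal_norm_sq_add_ne_zero hs _),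
    wirtingerDBar_ofReal hr, wirtingerD_norm_sq_add hv]
  simp only [map_add, map_mul, conj_conj]
  ring

lemma wirtingerD_log_norm_sq_add (hv : DifferentiableAt ℝ v z) (hs : 0 < s) :
    wirtingerD (fun w ↦ (Real.log (‖v w‖ ^ 2 + s) : ℂ)) z =
      wirtingerD v z * conj (v z) * ((‖v z‖ ^ 2 + s : ℝ) : ℂ)⁻¹ +
        wirtingerDLogRemainder v s z := by
  have hpos : (0 : ℝ) < ‖v z‖ ^ 2 + s := by positivity
  rw [wirtingerD_ofReal_comp (Real.hasDerivAt_log hpos.ne') ((hv.norm_sq ℝ).add_const s),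
    wirtingerD_norm_sq_add hv, wirtingerDLogRemainder, ofReal_inv]
  ring

lemma wirtingerDBar_mul_mul_inv_norm_sq_add {f g : ℂ → ℂ} (hv : DifferentiableAt ℝ v z)
    (hf : DifferentiableAt ℝ f z) (hg : DifferentiableAt ℝ g z) (hs : 0 < s) :
    wirtingerDBar (fun w ↦ f w * conj (g w) * ((‖v w‖ ^ 2 + s : ℝ) : ℂ)⁻¹) z =
      (wirtingerDBar f z * conj (g z) + f z * conj (wirtingerD g z)) *
          ((‖v z‖ ^ 2 + s : ℝ) : ℂ)⁻¹ -
        f z * conj (g z) * (wirtingerDBar v z * conj (v z) + v z * conj (wirtingerD v z)) /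
          ((‖v z‖ ^ 2 + s : ℝ) : ℂ) ^ 2 := by
  have hg' : DifferentiableAt ℝ (fun w ↦ conj (g w)) z :=
    (conjCLE : ℂ →L[ℝ] ℂ).differentiableAt.comp z hg
  have hr : DifferentiableAt ℝ (fun w ↦ ((‖v w‖ ^ 2 + s : ℝ) : ℂ)) z :=
    ofRealCLM.differentiableAt.comp z ((hv.norm_sq ℝ).add_const s)
  rw [wirtingerDBar_mul (hf.fun_mul hg') (hr.fun_inv (ofReal_norm_sq_add_ne_zero hs _)),
    wirtingerDBar_mul hf hg', wirtingerDBar_conj hg, wirtingerDBar_inv_norm_sq_add hv hs]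
  ring

lemma wirtingerDBar_wirtingerD_log_norm_sq_add (hv : ContDiff ℝ 2 v) (hs : 0 < s) (z : ℂ) :
    wirtingerDBar (wirtingerD fun w ↦ (Real.log (‖v w‖ ^ 2 + s) : ℂ)) z =
      (logMainTerm v s z : ℂ) +
        (wirtingerDBar (wirtingerDLogRemainder v s) z +
          conj (wirtingerDBar (wirtingerDLogRemainder v s) z)) := by
  have hdv : Differentiable ℝ v := hv.differentiable two_ne_zero
  have hdD : DifferentiableAt ℝ (wirtingerD v) z :=
    (contDiff_wirtingerD hv (m := 1) (by norm_num)).differentiable one_ne_zero z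
  have hdB : DifferentiableAt ℝ (wirtingerDBar v) z :=
    (contDiff_wirtingerDBar hv (m := 1) (by norm_num)).differentiable one_ne_zero z
  have hdv' : DifferentiableAt ℝ (fun w ↦ conj (v w)) z :=
    (conjCLE : ℂ →L[ℝ] ℂ).differentiableAt.comp z (hdv z)
  have hinv : DifferentiableAt ℝ (fun w ↦ ((‖v w‖ ^ 2 + s : ℝ) : ℂ)⁻¹) z :=
    (contDiff_inv_norm_sq_add hv hs).differentiable two_ne_zero z
  have hrem : DifferentiableAt ℝ (wirtingerDLogRemainder v s) z :=
    (contDiff_wirtingerDLogRemainder hv hs).differentiable one_ne_zero z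
  have hrem_eq : wirtingerDBar (wirtingerDLogRemainder v s) z = _ :=
    wirtingerDBar_mul_mul_inv_norm_sq_add (hdv z) (hdv z) hdB hs
  have hlog : (wirtingerD fun w ↦ (Real.log (‖v w‖ ^ 2 + s) : ℂ)) = _ :=
    funext fun w ↦ wirtingerD_log_norm_sq_add (hdv w) hs
  rw [hlog, wirtingerDBar_add ((hdD.fun_mul hdv').fun_mul hinv) hrem,
    wirtingerDBar_mul_mul_inv_norm_sq_add (hdv z) hdD (hdv z) hs, wirtingerDBar_wirtingerD_comm hv,
    add_comm (wirtingerDBar (wirtingerDLogRemainder v s) z), ← add_assoc]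
  congr 1
  rw [hrem_eq, logMainTerm]
  have hD := ofReal_norm_sq_add_ne_zero hs (v z)
  have hnorm (w : ℂ) : ((‖w‖ : ℂ)) ^ 2 = w * conj w := (mul_conj' w).symm
  push_cast [hnorm] at hD ⊢
  simp only [map_add, map_sub, map_mul, map_div₀, map_inv₀, map_pow, conj_conj, conj_ofReal]
  field_simp
  ring

lemma continuous_logMainTerm (hv : ContDiff ℝ 2 v) (hs : 0 < s) :
    Continuous (logMainTerm v s) := by
  have hD := (contDiff_wirtingerD hv (m := 1) (by norm_num)).continuous
  have hB := (contDiff_wirtingerDBar hv (m := 1) (by norm_num)).continuous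
  have hsq := (contDiff_norm_sq_add (s := s) hv).continuous
  exact ((continuous_const.mul ((hD.norm.pow 2).sub (hB.norm.pow 2))).div (hsq.pow 2)
    fun _ ↦ by positivity)

variable {η : ℂ → ℝ}

lemma integral_mul_re_wirtingerD_wirtingerDBar {φ : ℂ → ℝ} (hφ : ContDiff ℝ 2 φ)
    (hη : ContDiff ℝ 2 η) (hc : HasCompactSupport η) :
    ∫ z, φ z * (wirtingerD (wirtingerDBar fun w ↦ (η w : ℂ)) z).re =
      ∫ z, (wirtingerDBar (wirtingerD fun w ↦ (φ w : ℂ)) z).re * η z := by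
  have hφ' : ContDiff ℝ 2 fun w ↦ (φ w : ℂ) := ofRealCLM.contDiff.comp hφ
  have hη' : ContDiff ℝ 2 fun w ↦ (η w : ℂ) := ofRealCLM.contDiff.comp hη
  have hc' : HasCompactSupport fun w ↦ (η w : ℂ) := hc.comp_left (g := ofReal) ofReal_zero
  have hint : Integrable fun z ↦ (φ z : ℂ) * wirtingerD (wirtingerDBar fun w ↦ (η w : ℂ)) z :=
    (hφ'.continuous.mul (contDiff_wirtingerD (contDiff_wirtingerDBar hη' (m := 1) (by norm_num))
      (m := 0) (by norm_num)).continuous).integrable_of_hasCompactSupport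
      (hasCompactSupport_wirtingerD (hasCompactSupport_wirtingerDBar hc')).mul_left
  have hint' : Integrable fun z ↦ wirtingerDBar (wirtingerD fun w ↦ (φ w : ℂ)) z * η z :=
    ((contDiff_wirtingerDBar (contDiff_wirtingerD hφ' (m := 1) (by norm_num)) (m := 0)
      (by norm_num)).continuous.mul hη'.continuous).integrable_of_hasCompactSupport hc'.mul_left
  have h := congrArg re (integral_mul_wirtingerD_wirtingerDBar hφ' hη' hc')
  rw [← RCLike.re_eq_complex_re, ← integral_re hint, ← integral_re hint'] at h
  simpa only [RCLike.re_eq_complex_re, re_ofReal_mul, re_mul_ofReal] using h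

lemma integral_re_wirtingerDBar_mul {f : ℂ → ℂ} (hf : ContDiff ℝ 1 f) (hη : ContDiff ℝ 1 η)
    (hc : HasCompactSupport η) :
    ∫ z, (wirtingerDBar f z).re * η z =
      -∫ z, (f z * wirtingerDBar (fun w ↦ (η w : ℂ)) z).re := by
  have hη' : ContDiff ℝ 1 fun w ↦ (η w : ℂ) := ofRealCLM.contDiff.comp hη
  have hc' : HasCompactSupport fun w ↦ (η w : ℂ) := hc.comp_left (g := ofReal) ofReal_zero
  have hint : Integrable fun z ↦ f z * wirtingerDBar (fun w ↦ (η w : ℂ)) z :=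
    (hf.continuous.mul (contDiff_wirtingerDBar hη' (m := 0) (by norm_num)).continuous
      ).integrable_of_hasCompactSupport (hasCompactSupport_wirtingerDBar hc').mul_left
  have hint' : Integrable fun z ↦ wirtingerDBar f z * η z :=
    ((contDiff_wirtingerDBar hf (m := 0) (by norm_num)).continuous.mul
      hη'.continuous).integrable_of_hasCompactSupport hc'.mul_left
  have h := congrArg re (integral_mul_wirtingerDBar hf hη' hc')
  rw [neg_re, ← RCLike.re_eq_complex_re, ← integral_re hint, ← integral_re hint'] at h
  simpa only [RCLike.re_eq_complex_re, re_mul_ofReal, neg_neg] using (congrArg Neg.neg h).symm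

lemma integral_log_norm_sq_add_mul (hv : ContDiff ℝ 2 v) (hs : 0 < s) (hη : ContDiff ℝ 2 η)
    (hc : HasCompactSupport η) :
    ∫ z, Real.log (‖v z‖ ^ 2 + s) * (wirtingerD (wirtingerDBar fun w ↦ (η w : ℂ)) z).re =
      (∫ z, logMainTerm v s z * η z) -
        2 * ∫ z, (wirtingerDLogRemainder v s z * wirtingerDBar (fun w ↦ (η w : ℂ)) z).re := by
  have hB := contDiff_wirtingerDLogRemainder hv hs
  have hint : Integrable fun z ↦ logMainTerm v s z * η z :=
    ((continuous_logMainTerm hv hs).mul hη.continuous).integrable_of_hasCompactSupport hc.mul_left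
  have hint' : Integrable fun z ↦ (wirtingerDBar (wirtingerDLogRemainder v s) z).re * η z :=
    ((continuous_re.comp (contDiff_wirtingerDBar hB (m := 0) (by norm_num)).continuous).mul
      hη.continuous).integrable_of_hasCompactSupport hc.mul_left
  have hsplit (z : ℂ) :
      (wirtingerDBar (wirtingerD fun w ↦ (Real.log (‖v w‖ ^ 2 + s) : ℂ)) z).re * η z =
        logMainTerm v s z * η z +
          2 * ((wirtingerDBar (wirtingerDLogRemainder v s) z).re * η z) := by
    rw [wirtingerDBar_wirtingerD_log_norm_sq_add hv hs, add_re, add_re, ofReal_re, conj_re]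
    ring
  simp only [integral_mul_re_wirtingerD_wirtingerDBar (contDiff_log_norm_sq_add hv hs) hη hc,
    hsplit]
  rw [integral_add hint (hint'.const_mul 2), integral_const_mul,
    integral_re_wirtingerDBar_mul hB (hη.of_le one_le_two) hc]
  ring

lemma norm_wirtingerDLogRemainder_le {q : ℝ} (hs : 0 < s) (hq : 0 ≤ q)
    (hv : ‖wirtingerDBar v z‖ ^ 2 ≤ q * ‖v z‖ ^ 2) :
    ‖wirtingerDLogRemainder v s z‖ ≤ (q + 1) / 2 := by
  have hpos : 0 < ‖v z‖ ^ 2 + s := by positivity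
  rw [wirtingerDLogRemainder, norm_mul, norm_mul, RCLike.norm_conj, norm_inv, norm_real,
    Real.norm_of_nonneg hpos.le, ← div_eq_mul_inv, div_le_iff₀ hpos]
  nlinarith [two_mul_le_add_sq ‖v z‖ ‖wirtingerDBar v z‖, mul_nonneg hq hs.le]

lemma neg_le_logMainTerm {q : ℝ} (hs : 0 < s) (hq : 0 ≤ q)
    (hv : ‖wirtingerDBar v z‖ ^ 2 ≤ q * ‖v z‖ ^ 2) : -q ≤ logMainTerm v s z := by
  rw [logMainTerm, le_div_iff₀ (by positivity)]
  have hle : s * ‖v z‖ ^ 2 ≤ (‖v z‖ ^ 2 + s) ^ 2 := by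
    nlinarith [sq_nonneg (‖v z‖ ^ 2), sq_nonneg s, mul_nonneg hs.le (sq_nonneg ‖v z‖)]
  nlinarith [mul_le_mul_of_nonneg_left hv hs.le, mul_le_mul_of_nonneg_left hle hq,
    mul_nonneg hs.le (sq_nonneg ‖wirtingerD v z‖)]

lemma neg_integral_le_integral_log_norm_sq_add_mul {q : ℂ → ℝ} (hv : ContDiff ℝ 2 v) (hs : 0 < s)
    (hη : ContDiff ℝ 2 η) (hc : HasCompactSupport η) (hη₀ : ∀ z, 0 ≤ η z)
    (hq : IntegrableOn q (tsupport η)) (hq₀ : ∀ z, 0 ≤ q z)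
    (hvq : ∀ᵐ z, z ∈ tsupport η → ‖wirtingerDBar v z‖ ^ 2 ≤ q z * ‖v z‖ ^ 2) :
    -∫ z in tsupport η, (q z * η z + (q z + 1) * ‖wirtingerDBar (fun w ↦ (η w : ℂ)) z‖) ≤
      ∫ z, Real.log (‖v z‖ ^ 2 + s) * (wirtingerD (wirtingerDBar fun w ↦ (η w : ℂ)) z).re := by
  rw [integral_log_norm_sq_add_mul hv hs hη hc]
  set β := wirtingerDBar fun w ↦ (η w : ℂ)
  have hβ : Continuous β :=
    (contDiff_wirtingerDBar (ofRealCLM.contDiff.comp hη) (m := 1) (by norm_num)).continuous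
  have hβ_zero {z : ℂ} (hz : z ∉ tsupport η) : β z = 0 :=
    image_eq_zero_of_notMem_tsupport fun h ↦
      hz (tsupport_comp_subset (g := ofReal) ofReal_zero η (tsupport_wirtingerDBar_subset h))
  have hmain : IntegrableOn (fun z ↦ logMainTerm v s z * η z) (tsupport η) :=
    ((continuous_logMainTerm hv hs).mul hη.continuous).continuousOn.integrableOn_compact hc
  have hrem : IntegrableOn (fun z ↦ 2 * (wirtingerDLogRemainder v s z * β z).re) (tsupport η) :=
    (continuous_const.mul (continuous_re.comp ((contDiff_wirtingerDLogRemainder hv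
      hs).continuous.mul hβ))).continuousOn.integrableOn_compact hc
  have hbound : IntegrableOn (fun z ↦ q z * η z + (q z + 1) * ‖β z‖) (tsupport η) :=
    (hq.mul_continuousOn hη.continuous.continuousOn hc).add <|
      (hq.add (continuousOn_const.integrableOn_compact hc)).mul_continuousOn
        hβ.norm.continuousOn hc
  have hsupp : (∫ z, logMainTerm v s z * η z) - 2 * ∫ z, (wirtingerDLogRemainder v s z * β z).re =
      ∫ z in tsupport η,
        (logMainTerm v s z * η z - 2 * (wirtingerDLogRemainder v s z * β z).re) := by
    rw [integral_sub hmain hrem, integral_const_mul,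
      setIntegral_eq_integral_of_forall_compl_eq_zero
        fun z hz ↦ by rw [image_eq_zero_of_notMem_tsupport hz, mul_zero],
      setIntegral_eq_integral_of_forall_compl_eq_zero
        fun z hz ↦ by rw [hβ_zero hz, mul_zero, zero_re]]
  rw [hsupp, ← integral_neg]
  refine setIntegral_mono_on_ae hbound.neg (hmain.sub hrem) (isClosed_tsupport η).measurableSet
    (hvq.mono fun z hz hzη ↦ ?_)
  have hmain_le := mul_le_mul_of_nonneg_right (neg_le_logMainTerm hs (hq₀ z) (hz hzη)) (hη₀ z)
  have hrem_le : (wirtingerDLogRemainder v s z * β z).re ≤ (q z + 1) / 2 * ‖β z‖ :=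
    (re_le_norm _).trans ((norm_mul_le _ _).trans (mul_le_mul_of_nonneg_right
      (norm_wirtingerDLogRemainder_le hs (hq₀ z) (hz hzη)) (norm_nonneg _)))
  linarith

end LogEstimate

/-! ### Radial test functions -/

section RadialTestFunctions

variable {z₁ z : ℂ} {r R t : ℝ}

/-- A smooth step that rises from `0` to `1` on `r² ≤ t ≤ (2r)²`, to be evaluated at
`t = ‖z - z₁‖²`. -/
noncomputable def annulusStep (r t : ℝ) : ℝ :=
  Real.smoothTransition (t / r ^ 2 - 1)

lemma contDiff_annulusStep (r : ℝ) : ContDiff ℝ ∞ (annulusStep r) :=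
  Real.smoothTransition.contDiff.comp ((contDiff_id.div_const _).sub contDiff_const)

lemma monotone_annulusStep (r : ℝ) : Monotone (annulusStep r) :=
  fun _ _ h ↦ Real.smoothTransition.monotone (by gcongr)

lemma annulusStep_eq_zero (hr : 0 < r) (ht : t ≤ r ^ 2) : annulusStep r t = 0 :=
  Real.smoothTransition.zero_of_nonpos (sub_nonpos.2 ((div_le_one (by positivity)).2 ht))

lemma annulusStep_eq_one (hr : 0 < r) (ht : (2 * r) ^ 2 ≤ t) : annulusStep r t = 1 := by
  refine Real.smoothTransition.one_of_one_le ?_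
  rw [le_sub_iff_add_le, le_div_iff₀ (by positivity)]
  linarith [sq_nonneg r]

lemma annulusStep_anti (hr : 0 < r) (hrR : r ≤ R) (t : ℝ) : annulusStep R t ≤ annulusStep r t := by
  rcases le_total t 0 with ht | ht
  · rw [annulusStep_eq_zero hr (ht.trans (by positivity)),
      annulusStep_eq_zero (hr.trans_le hrR) (ht.trans (by positivity))]
  · exact Real.smoothTransition.monotone (by gcongr)

lemma deriv_annulusStep_eq_zero_of_lt (hr : 0 < r) (ht : t < r ^ 2) :
    deriv (annulusStep r) t = 0 := by
  have h : annulusStep r =ᶠ[𝓝 t] fun _ ↦ 0 :=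
    (eventually_lt_nhds ht).mono fun _ hu ↦ annulusStep_eq_zero hr hu.le
  rw [h.deriv_eq, deriv_const]

lemma deriv_annulusStep_eq_zero_of_gt (hr : 0 < r) (ht : (2 * r) ^ 2 < t) :
    deriv (annulusStep r) t = 0 := by
  have h : annulusStep r =ᶠ[𝓝 t] fun _ ↦ 1 :=
    (eventually_gt_nhds ht).mono fun _ hu ↦ annulusStep_eq_one hr hu.le
  rw [h.deriv_eq, deriv_const]

/-- A nonnegative radial weight on the annulus `r ≤ ‖z - z₁‖ ≤ 2r`, whose mass does not depend on
`r`. -/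
noncomputable def annulusWeight (z₁ : ℂ) (r : ℝ) (z : ℂ) : ℝ :=
  deriv (annulusStep r) (‖z - z₁‖ ^ 2)

lemma continuous_annulusWeight (z₁ : ℂ) (r : ℝ) : Continuous (annulusWeight z₁ r) :=
  ((contDiff_annulusStep r).continuous_deriv (by simp)).comp (by fun_prop)

lemma annulusWeight_nonneg (z₁ : ℂ) (r : ℝ) (z : ℂ) : 0 ≤ annulusWeight z₁ r z :=
  (monotone_annulusStep r).deriv_nonneg

lemma le_norm_of_annulusWeight_ne_zero (hr : 0 < r) (h : annulusWeight z₁ r z ≠ 0) :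
    r ≤ ‖z - z₁‖ := by
  by_contra! hlt
  exact h (deriv_annulusStep_eq_zero_of_lt hr (by gcongr))

lemma norm_le_of_annulusWeight_ne_zero (hr : 0 < r) (h : annulusWeight z₁ r z ≠ 0) :
    ‖z - z₁‖ ≤ 2 * r := by
  by_contra! hlt
  exact h (deriv_annulusStep_eq_zero_of_gt hr (by gcongr))

lemma hasCompactSupport_annulusWeight (z₁ : ℂ) (hr : 0 < r) :
    HasCompactSupport (annulusWeight z₁ r) :=
  .of_support_subset_isCompact (isCompact_closedBall z₁ (2 * r)) fun _ hz ↦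
    mem_closedBall_iff_norm.2 (norm_le_of_annulusWeight_ne_zero hr hz)

lemma integrable_annulusWeight (z₁ : ℂ) (hr : 0 < r) : Integrable (annulusWeight z₁ r) :=
  (continuous_annulusWeight z₁ r).integrable_of_hasCompactSupport
    (hasCompactSupport_annulusWeight z₁ hr)

lemma integral_annulusWeight_pos (z₁ : ℂ) (hr : 0 < r) : 0 < ∫ z, annulusWeight z₁ r z := by
  obtain ⟨t, ht, hslope⟩ := exists_deriv_eq_slope (annulusStep r)
    (show r ^ 2 < (2 * r) ^ 2 by gcongr; linarith)
    (contDiff_annulusStep r).continuous.continuousOn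
    ((contDiff_annulusStep r).differentiable (by simp)).differentiableOn
  rw [annulusStep_eq_one hr le_rfl, annulusStep_eq_zero hr le_rfl, sub_zero] at hslope
  refine (continuous_annulusWeight z₁ r).integral_pos_of_hasCompactSupport_nonneg_nonzero
    (x := z₁ + √t) (hasCompactSupport_annulusWeight z₁ hr) (annulusWeight_nonneg z₁ r) ?_
  have ht₀ : 0 ≤ t := (sq_nonneg r).trans ht.1.le
  rw [annulusWeight, add_sub_cancel_left, norm_real, Real.norm_eq_abs, sq_abs, Real.sq_sqrt ht₀,
    hslope]
  exact one_div_ne_zero (sub_pos.2 (ht.1.trans ht.2)).ne'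

lemma exists_nonneg_mul_deriv_eq_neg {σ : ℝ → ℝ} {a c : ℝ} {n : ℕ} (hσ : ContDiff ℝ n σ)
    (hσ₀ : ∀ t, 0 ≤ σ t) (ha : 0 < a) (hσa : ∀ t ≤ a, σ t = 0) (hσc : ∀ t, c ≤ t → σ t = 0) :
    ∃ G : ℝ → ℝ, ContDiff ℝ (n + 1) G ∧ (∀ t, 0 ≤ G t) ∧ (∀ t, c ≤ t → G t = 0) ∧
      ∀ t, t * deriv G t = -σ t := by
  set τ : ℝ → ℝ := fun t ↦ σ t / t
  have hτ : ContDiff ℝ n τ := contDiff_iff_contDiffAt.2 fun t ↦ by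
    rcases eq_or_ne t 0 with rfl | ht
    · have hzero : τ =ᶠ[𝓝 0] fun _ ↦ 0 := (eventually_lt_nhds ha).mono fun t ht ↦ by
        simp only [τ, hσa t ht.le, zero_div]
      exact contDiffAt_const.congr_of_eventuallyEq hzero
    · exact hσ.contDiffAt.div contDiffAt_id ht
  have hτ₀ (t : ℝ) : 0 ≤ τ t := by
    rcases le_total t a with ht | ht
    · simp only [τ, hσa t ht, zero_div, le_refl]
    · exact div_nonneg (hσ₀ t) (ha.le.trans ht)
  have hτc (t : ℝ) (ht : c ≤ t) : τ t = 0 := by simp only [τ, hσc t ht, zero_div]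
  have hG (x : ℝ) : HasDerivAt (fun x ↦ ∫ t in x..c, τ t) (-τ x) x :=
    intervalIntegral.integral_hasDerivAt_left (hτ.continuous.intervalIntegrable _ _)
      hτ.continuous.stronglyMeasurable.stronglyMeasurableAtFilter hτ.continuous.continuousAt
  have hG_deriv : (deriv fun x ↦ ∫ t in x..c, τ t) = fun x ↦ -τ x := funext fun x ↦ (hG x).deriv
  have hGc (x : ℝ) (hx : c ≤ x) : ∫ t in x..c, τ t = 0 := by
    rw [intervalIntegral.integral_zero_ae]
    filter_upwards with t ht
    exact hτc t (Set.uIoc_of_ge hx ▸ ht).1.le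
  refine ⟨fun x ↦ ∫ t in x..c, τ t, contDiff_succ_iff_deriv.2 ⟨fun x ↦ (hG x).differentiableAt,
    by simp, hG_deriv ▸ hτ.neg⟩, fun x ↦ ?_, hGc, fun t ↦ ?_⟩
  · rcases le_total x c with hx | hx
    · exact intervalIntegral.integral_nonneg hx fun t _ ↦ hτ₀ t
    · exact (hGc x hx).ge
  · rw [hG_deriv]
    rcases eq_or_ne t 0 with rfl | ht
    · rw [hσa 0 ha.le, zero_mul, neg_zero]
    · simp only [τ, mul_neg, mul_div_cancel₀ _ ht]

lemma wirtingerD_sub_const (z₁ z : ℂ) : wirtingerD (fun w ↦ w - z₁) z = 1 :=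
  wirtingerD_of_hasDerivAt ((hasDerivAt_id z).sub_const z₁)

lemma wirtingerD_radial {G : ℝ → ℝ} (hG : DifferentiableAt ℝ G (‖z - z₁‖ ^ 2)) :
    wirtingerD (fun w ↦ (G (‖w - z₁‖ ^ 2) : ℂ)) z =
      deriv G (‖z - z₁‖ ^ 2) * conj (z - z₁) := by
  have hsub : DifferentiableAt ℂ (fun w ↦ w - z₁) z := by fun_prop
  have hD : wirtingerD (fun w ↦ ((‖w - z₁‖ ^ 2 : ℝ) : ℂ)) z = conj (z - z₁) := by
    simpa [wirtingerD_sub_const, wirtingerDBar_eq_zero_of_differentiableAt hsub] using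
      wirtingerD_norm_sq_add (s := 0) (hsub.restrictScalars ℝ)
  rw [wirtingerD_ofReal_comp hG.hasDerivAt ((hsub.restrictScalars ℝ).norm_sq ℝ), hD]

lemma wirtingerDBar_radial {G : ℝ → ℝ} (hG : DifferentiableAt ℝ G (‖z - z₁‖ ^ 2)) :
    wirtingerDBar (fun w ↦ (G (‖w - z₁‖ ^ 2) : ℂ)) z = deriv G (‖z - z₁‖ ^ 2) * (z - z₁) := by
  have hsq : DifferentiableAt ℝ (fun w ↦ ‖w - z₁‖ ^ 2) z :=
    (differentiableAt_id.sub_const z₁).norm_sq ℝ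
  have hcomp : DifferentiableAt ℝ (fun w ↦ G (‖w - z₁‖ ^ 2)) z := hG.comp z hsq
  rw [wirtingerDBar_ofReal hcomp, wirtingerD_radial hG, map_mul, conj_ofReal,
    conj_conj]

lemma wirtingerD_wirtingerDBar_radial {G : ℝ → ℝ} (hG : ContDiff ℝ 2 G) (z₁ z : ℂ) :
    wirtingerD (wirtingerDBar fun w ↦ (G (‖w - z₁‖ ^ 2) : ℂ)) z =
      deriv (fun t ↦ t * deriv G t) (‖z - z₁‖ ^ 2) := by
  have hG' : Differentiable ℝ (deriv G) := hG.differentiable_deriv_two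
  have hsub : DifferentiableAt ℝ (fun w ↦ w - z₁) z := differentiableAt_id.sub_const z₁
  have hDBar : (wirtingerDBar fun w ↦ (G (‖w - z₁‖ ^ 2) : ℂ)) =
      fun w ↦ ((deriv G (‖w - z₁‖ ^ 2) : ℝ) : ℂ) * (w - z₁) :=
    funext fun w ↦ wirtingerDBar_radial (hG.differentiable two_ne_zero _)
  have hcoef : DifferentiableAt ℝ (fun w ↦ ((deriv G (‖w - z₁‖ ^ 2) : ℝ) : ℂ)) z :=
    ofRealCLM.differentiableAt.comp z ((hG' _).comp z (hsub.norm_sq ℝ))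
  rw [hDBar, wirtingerD_mul hcoef hsub, wirtingerD_radial (hG' _),
    wirtingerD_sub_const, deriv_fun_mul differentiableAt_fun_id (hG' _), mul_assoc,
    mul_comm (conj _), mul_conj', deriv_id'']
  push_cast
  ring

-- With `σ = annulusStep r - annulusStep R` the test function is `G (‖z - z₁‖²)` for the solution
-- `G` of `t * deriv G t = -σ t` that vanishes for large `t`, so that `∂∂̄` of it is `-deriv σ`.
lemma exists_wirtingerD_wirtingerDBar_eq_annulusWeight_sub (z₁ : ℂ) (hr : 0 < r) (hrR : r ≤ R) :
    ∃ η : ℂ → ℝ, ContDiff ℝ 2 η ∧ (∀ z, 0 ≤ η z) ∧ tsupport η ⊆ closedBall z₁ (2 * R) ∧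
      ∀ z, wirtingerD (wirtingerDBar fun w ↦ (η w : ℂ)) z =
        ((annulusWeight z₁ R z - annulusWeight z₁ r z : ℝ) : ℂ) := by
  have hR : 0 < R := hr.trans_le hrR
  obtain ⟨G, hG, hG₀, hG_zero, hG'⟩ := exists_nonneg_mul_deriv_eq_neg (n := 1) (a := r ^ 2)
    (c := (2 * R) ^ 2) (σ := fun t ↦ annulusStep r t - annulusStep R t)
    (contDiff_infty.1 ((contDiff_annulusStep r).sub (contDiff_annulusStep R)) 1)
    (fun t ↦ sub_nonneg.2 (annulusStep_anti hr hrR t)) (by positivity)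
    (fun t ht ↦ by
      rw [annulusStep_eq_zero hr ht, annulusStep_eq_zero hR (ht.trans (by gcongr)), sub_zero])
    (fun t ht ↦ by
      rw [annulusStep_eq_one hr (le_trans (by gcongr) ht), annulusStep_eq_one hR ht, sub_self])
  replace hG : ContDiff ℝ 2 G := hG.of_le (by norm_num)
  refine ⟨fun z ↦ G (‖z - z₁‖ ^ 2), hG.comp ((contDiff_id.sub contDiff_const).norm_sq ℝ),
    fun z ↦ hG₀ _, closure_minimal (fun z hz ↦ ?_) isClosed_closedBall, fun z ↦ ?_⟩
  · by_contra hz'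
    rw [mem_closedBall_iff_norm, not_le] at hz'
    exact hz (hG_zero _ (by gcongr))
  · have hdiff (ρ : ℝ) : DifferentiableAt ℝ (annulusStep ρ) (‖z - z₁‖ ^ 2) :=
      (contDiff_annulusStep ρ).differentiable (by simp) _
    simp only [wirtingerD_wirtingerDBar_radial hG, hG', neg_sub]
    rw [deriv_fun_sub (hdiff R) (hdiff r), annulusWeight, annulusWeight]

lemma integral_annulusWeight_eq (z₁ : ℂ) (hr : 0 < r) (hrR : r ≤ R) :
    ∫ z, annulusWeight z₁ r z = ∫ z, annulusWeight z₁ R z := by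
  obtain ⟨η, hη, -, hsupp, hηw⟩ :=
    exists_wirtingerD_wirtingerDBar_eq_annulusWeight_sub z₁ hr hrR
  have hc : HasCompactSupport η := .of_support_subset_isCompact (isCompact_closedBall z₁ (2 * R))
    ((subset_tsupport η).trans hsupp)
  have h := integral_mul_re_wirtingerD_wirtingerDBar (φ := fun _ ↦ 1) contDiff_const hη hc
  have hconst : wirtingerD (fun _ ↦ ((1 : ℝ) : ℂ)) = fun _ ↦ 0 := by ext; simp [wirtingerD]
  simp only [hηw, hconst, ofReal_re, one_mul] at h
  rw [integral_sub (integrable_annulusWeight z₁ (hr.trans_le hrR))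
    (integrable_annulusWeight z₁ hr)] at h
  exact (sub_eq_zero.1 (h.trans (by simp [wirtingerDBar]))).symm

end RadialTestFunctions

/-! ### Strong unique continuation -/

section UniqueContinuation

variable {z₀ z₁ : ℂ} {r R : ℝ} {q : ℂ → ℝ}

lemma integral_mul_annulusWeight_le {φ : ℂ → ℝ} {b : ℝ} (hr : 0 < r) (hφ : Continuous φ)
    (h : ∀ z, r ≤ ‖z - z₁‖ → ‖z - z₁‖ ≤ 2 * r → φ z ≤ b) :
    ∫ z, φ z * annulusWeight z₁ r z ≤ b * ∫ z, annulusWeight z₁ r z := by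
  rw [← integral_const_mul]
  refine integral_mono ((hφ.mul (continuous_annulusWeight z₁ r)).integrable_of_hasCompactSupport
    (hasCompactSupport_annulusWeight z₁ hr).mul_left)
    ((integrable_annulusWeight z₁ hr).const_mul b) fun z ↦ ?_
  by_cases hz : annulusWeight z₁ r z = 0
  · simp only [hz, mul_zero, le_refl]
  · exact mul_le_mul_of_nonneg_right (h z (le_norm_of_annulusWeight_ne_zero hr hz)
      (norm_le_of_annulusWeight_ne_zero hr hz)) (annulusWeight_nonneg z₁ r z)

lemma le_integral_mul_annulusWeight {φ : ℂ → ℝ} {b : ℝ} (hr : 0 < r) (hφ : Continuous φ)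
    (h : ∀ z, r ≤ ‖z - z₁‖ → ‖z - z₁‖ ≤ 2 * r → b ≤ φ z) :
    b * ∫ z, annulusWeight z₁ r z ≤ ∫ z, φ z * annulusWeight z₁ r z := by
  have hneg := integral_mul_annulusWeight_le hr hφ.neg fun z hz hz' ↦ neg_le_neg (h z hz hz')
  simp only [Pi.neg_apply, neg_mul, integral_neg] at hneg
  exact neg_le_neg_iff.1 hneg

lemma exists_log_norm_sq_add_le (z₁ : ℂ) (hr : 0 < r) (hrR : r ≤ R)
    (hq : IntegrableOn q (closedBall z₁ (2 * R))) (hq₀ : ∀ z, 0 ≤ q z) :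
    ∃ C, ∀ (v : ℂ → ℂ) (κ M s : ℝ), 0 < s → 0 ≤ κ → ContDiff ℝ 2 v →
      (∀ᵐ z, z ∈ closedBall z₁ (2 * R) → ‖wirtingerDBar v z‖ ^ 2 ≤ q z * ‖v z‖ ^ 2) →
      (∀ z, r ≤ ‖z - z₁‖ → ‖z - z₁‖ ≤ 2 * r → κ ≤ ‖v z‖) →
      (∀ z, R ≤ ‖z - z₁‖ → ‖z - z₁‖ ≤ 2 * R → ‖v z‖ ≤ M) →
      Real.log (κ ^ 2 + s) ≤ C + Real.log (M ^ 2 + s) := by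
  have hR : 0 < R := hr.trans_le hrR
  obtain ⟨η, hη, hη₀, hsupp, hηw⟩ :=
    exists_wirtingerD_wirtingerDBar_eq_annulusWeight_sub z₁ hr hrR
  have hc : HasCompactSupport η := .of_support_subset_isCompact (isCompact_closedBall z₁ (2 * R))
    ((subset_tsupport η).trans hsupp)
  set p := ∫ z, annulusWeight z₁ r z with hp
  have hp₀ : 0 < p := integral_annulusWeight_pos z₁ hr
  refine ⟨(∫ z in tsupport η,
    (q z * η z + (q z + 1) * ‖wirtingerDBar (fun w ↦ (η w : ℂ)) z‖)) / p,
    fun v κ M s hs hκ hv hvq hlow hup ↦ ?_⟩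
  have hlog : Continuous fun z ↦ Real.log (‖v z‖ ^ 2 + s) :=
    (contDiff_log_norm_sq_add hv hs).continuous
  have hint (ρ : ℝ) (hρ : 0 < ρ) :
      Integrable fun z ↦ Real.log (‖v z‖ ^ 2 + s) * annulusWeight z₁ ρ z :=
    (hlog.mul (continuous_annulusWeight z₁ ρ)).integrable_of_hasCompactSupport
      (hasCompactSupport_annulusWeight z₁ hρ).mul_left
  have hest := neg_integral_le_integral_log_norm_sq_add_mul hv hs hη hc hη₀ (hq.mono_set hsupp)
    hq₀ (hvq.mono fun z hz hzη ↦ hz (hsupp hzη))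
  simp only [hηw, ofReal_re, mul_sub] at hest
  rw [integral_sub (hint R hR) (hint r hr)] at hest
  have houter : ∫ z, Real.log (‖v z‖ ^ 2 + s) * annulusWeight z₁ R z ≤
      Real.log (M ^ 2 + s) * p := by
    rw [hp, integral_annulusWeight_eq z₁ hr hrR]
    refine integral_mul_annulusWeight_le hR hlog fun z hz hz' ↦
      Real.log_le_log (by positivity) ?_
    gcongr
    exact hup z hz hz'
  have hinner : Real.log (κ ^ 2 + s) * p ≤
      ∫ z, Real.log (‖v z‖ ^ 2 + s) * annulusWeight z₁ r z := by
    refine le_integral_mul_annulusWeight hr hlog fun z hz hz' ↦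
      Real.log_le_log (by positivity) ?_
    gcongr
    exact hlow z hz hz'
  rw [← sub_le_iff_le_add, le_div_iff₀ hp₀, sub_mul]
  linarith

lemma exists_sq_le_mul_sq (z₁ : ℂ) (hr : 0 < r) (hrR : r ≤ R)
    (hq : IntegrableOn q (closedBall z₁ (2 * R))) (hq₀ : ∀ z, 0 ≤ q z) :
    ∃ C, ∀ (v : ℂ → ℂ) (κ M : ℝ), 0 ≤ κ → ContDiff ℝ 2 v →
      (∀ᵐ z, z ∈ closedBall z₁ (2 * R) → ‖wirtingerDBar v z‖ ^ 2 ≤ q z * ‖v z‖ ^ 2) →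
      (∀ z, r ≤ ‖z - z₁‖ → ‖z - z₁‖ ≤ 2 * r → κ ≤ ‖v z‖) →
      (∀ z, R ≤ ‖z - z₁‖ → ‖z - z₁‖ ≤ 2 * R → ‖v z‖ ≤ M) →
      κ ^ 2 ≤ C * M ^ 2 := by
  obtain ⟨C, hC⟩ := exists_log_norm_sq_add_le z₁ hr hrR hq hq₀
  refine ⟨Real.exp C, fun v κ M hκ hv hvq hlow hup ↦ le_of_forall_pos_le_add fun ε hε ↦ ?_⟩
  have hs : 0 < ε / Real.exp C := by positivity
  have hlog := hC v κ M (ε / Real.exp C) hs hκ hv hvq hlow hup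
  rw [Real.log_le_iff_le_exp (by positivity), Real.exp_add, Real.exp_log (by positivity), mul_add,
    mul_div_cancel₀ _ (Real.exp_ne_zero C)] at hlog
  linarith

lemma norm_wirtingerDBar_inv_pow_smul_sq_le {F : ℂ → ℂ} {z : ℂ} {a : ℝ}
    (hF : DifferentiableAt ℝ F z) (hz : z ≠ z₀) (N : ℕ)
    (hFa : ‖wirtingerDBar F z‖ ^ 2 ≤ a * ‖F z‖ ^ 2) :
    ‖wirtingerDBar (fun w ↦ ((w - z₀) ^ N)⁻¹ • F w) z‖ ^ 2 ≤
      a * ‖((z - z₀) ^ N)⁻¹ • F z‖ ^ 2 := by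
  have hinv : DifferentiableAt ℂ (fun w ↦ ((w - z₀) ^ N)⁻¹) z :=
    (hasDerivAt_inv_sub_pow N hz).differentiableAt
  simp only [smul_eq_mul]
  rw [wirtingerDBar_mul (hinv.restrictScalars ℝ) hF,
    wirtingerDBar_eq_zero_of_differentiableAt hinv, zero_mul, zero_add, norm_mul, norm_mul, mul_pow,
    mul_pow, mul_left_comm]
  gcongr

lemma norm_inv_pow_smul (z w : ℂ) (N : ℕ) :
    ‖((z - z₀) ^ N)⁻¹ • w‖ = ‖w‖ / ‖z - z₀‖ ^ N := by
  rw [norm_smul, norm_inv, norm_pow, div_eq_inv_mul]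

lemma div_pow_le_norm_inv_pow_smul {z w : ℂ} {c ρ : ℝ} (hz : z ≠ z₀) (hzρ : ‖z - z₀‖ ≤ ρ)
    (hw : c ≤ ‖w‖) (N : ℕ) : c / ρ ^ N ≤ ‖((z - z₀) ^ N)⁻¹ • w‖ := by
  have hpos : 0 < ‖z - z₀‖ := norm_sub_pos_iff.2 hz
  rw [norm_inv_pow_smul]
  gcongr

lemma norm_inv_pow_smul_le_div_pow {z w : ℂ} {M ρ : ℝ} (hρ : 0 < ρ) (hzρ : ρ ≤ ‖z - z₀‖)
    (hw : ‖w‖ ≤ M) (N : ℕ) : ‖((z - z₀) ^ N)⁻¹ • w‖ ≤ M / ρ ^ N := by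
  rw [norm_inv_pow_smul]
  gcongr
  exact (norm_nonneg w).trans hw

lemma IsFlatAt.exists_mul_pow_le {F : ℂ → ℂ} {c d : ℝ} (h : IsFlatAt F z₀) (hF : ContDiff ℝ ∞ F)
    (hd : 0 < d) (hz₁ : ‖z₁ - z₀‖ = d) (hq : IntegrableOn q (closedBall z₁ (2 * (4 * d))))
    (hq₀ : ∀ z, 0 ≤ q z) (hFq : ∀ᵐ z, ‖wirtingerDBar F z‖ ^ 2 ≤ q z * ‖F z‖ ^ 2)
    (hc : 0 < c) (hr : 0 < r) (hrd : 2 * r ≤ d) (hFc : ∀ z, ‖z - z₁‖ ≤ 2 * r → c ≤ ‖F z‖) :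
    ∃ C, ∀ N : ℕ, c ^ 2 * (9 / 4) ^ N ≤ C := by
  obtain ⟨C, hC⟩ := exists_sq_le_mul_sq z₁ hr (by linarith) hq hq₀
  obtain ⟨M, hM⟩ := (isCompact_closedBall z₁ (2 * (4 * d))).exists_bound_of_continuousOn
    hF.continuous.continuousOn
  refine ⟨C * M ^ 2, fun N ↦ ?_⟩
  have hvq : ∀ᵐ z, z ∈ closedBall z₁ (2 * (4 * d)) →
      ‖wirtingerDBar (fun w ↦ ((w - z₀) ^ N)⁻¹ • F w) z‖ ^ 2 ≤
        q z * ‖((z - z₀) ^ N)⁻¹ • F z‖ ^ 2 := by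
    filter_upwards [hFq, Measure.ae_ne volume z₀] with z hz hne _
    exact norm_wirtingerDBar_inv_pow_smul_sq_le (hF.differentiable (by simp) z) hne N hz
  have hne (z : ℂ) (hz : ‖z - z₁‖ ≤ 2 * r) : z ≠ z₀ := fun hzz ↦
    (hc.trans_le (hFc z hz)).ne' (by rw [hzz, h.apply_eq_zero, norm_zero])
  -- `F / (z - z₀)^N` gains a factor `(3/2)^N`, because `‖z - z₀‖` is at most `2d` on the inner
  -- annulus and at least `3d` on the outer one.
  have hlow (z : ℂ) (_ : r ≤ ‖z - z₁‖) (hz : ‖z - z₁‖ ≤ 2 * r) :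
      c / (2 * d) ^ N ≤ ‖((z - z₀) ^ N)⁻¹ • F z‖ :=
    div_pow_le_norm_inv_pow_smul (hne z hz)
      (by linarith [norm_sub_le_norm_sub_add_norm_sub z z₁ z₀]) (hFc z hz) N
  have hup (z : ℂ) (hz : 4 * d ≤ ‖z - z₁‖) (hz' : ‖z - z₁‖ ≤ 2 * (4 * d)) :
      ‖((z - z₀) ^ N)⁻¹ • F z‖ ≤ M / (3 * d) ^ N :=
    norm_inv_pow_smul_le_div_pow (by positivity)
      (by linarith [norm_sub_le_norm_sub_add_norm_sub z z₀ z₁, norm_sub_rev z₀ z₁])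
      (hM z (mem_closedBall_iff_norm.2 hz')) N
  have hmain := hC _ _ _ (by positivity)
    (mod_cast h.contDiff_inv_pow_smul hF N 2) hvq hlow hup
  rw [div_pow, div_pow, mul_div_assoc', div_le_div_iff₀ (by positivity) (by positivity),
    ← pow_mul, ← pow_mul, mul_comm N, pow_mul, pow_mul] at hmain
  rw [← mul_le_mul_iff_of_pos_right (show (0 : ℝ) < ((2 * d) ^ 2) ^ N by positivity), mul_assoc,
    ← mul_pow]
  convert hmain using 3
  ring

theorem IsFlatAt.eventuallyEq_zero {F : ℂ → ℂ} (h : IsFlatAt F z₀) (hF : ContDiff ℝ ∞ F)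
    (hq : IntegrableAtFilter q (𝓝 z₀)) (hq₀ : ∀ z, 0 ≤ q z)
    (hFq : ∀ᵐ z, ‖wirtingerDBar F z‖ ^ 2 ≤ q z * ‖F z‖ ^ 2) : F =ᶠ[𝓝 z₀] 0 := by
  obtain ⟨t, ht, hqt⟩ := hq
  obtain ⟨ρ, hρ, hρt⟩ := Metric.mem_nhds_iff.1 ht
  by_contra hne
  obtain ⟨z₁, hFz₁, hz₁⟩ := ((not_eventually.1 hne).and_eventually
    (ball_mem_nhds z₀ (show 0 < ρ / 9 by positivity))).exists
  rw [dist_eq_norm] at hz₁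
  have hd : 0 < ‖z₁ - z₀‖ := norm_sub_pos_iff.2 fun hzz ↦ hFz₁ (hzz ▸ h.apply_eq_zero)
  have hc : 0 < ‖F z₁‖ / 2 := half_pos (norm_pos_iff.2 hFz₁)
  obtain ⟨δ, hδ, hFδ⟩ := Metric.eventually_nhds_iff.1
    (hF.continuous.norm.continuousAt.eventually_const_lt (half_lt_self (norm_pos_iff.2 hFz₁)))
  have hsub : closedBall z₁ (2 * (4 * ‖z₁ - z₀‖)) ⊆ ball z₀ ρ :=
    closedBall_subset_ball' (by rw [dist_eq_norm]; linarith)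
  set r := min (‖z₁ - z₀‖ / 2) (δ / 3)
  have hr : 0 < r := by positivity
  have hrd : r ≤ ‖z₁ - z₀‖ / 2 := min_le_left _ _
  have hrδ : r ≤ δ / 3 := min_le_right _ _
  obtain ⟨C, hC⟩ := h.exists_mul_pow_le hF hd rfl (hqt.mono_set (hsub.trans hρt)) hq₀ hFq hc hr
    (by linarith) fun z hz ↦ (hFδ (by rw [dist_eq_norm]; linarith)).le
  obtain ⟨N, hN⟩ :=
    pow_unbounded_of_one_lt (C / (‖F z₁‖ / 2) ^ 2) (show 1 < (9 / 4 : ℝ) by norm_num)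
  rw [div_lt_iff₀' (by positivity)] at hN
  exact (hC N).not_gt hN

lemma ae_fderiv_eq_zero_of_eq_zero {E : Type*} [NormedAddCommGroup E] [NormedSpace ℝ E]
    [FiniteDimensional ℝ E] [MeasurableSpace E] [BorelSpace E] {μ : Measure E} [μ.IsAddHaarMeasure]
    {f : E → E} (hf : Differentiable ℝ f) : ∀ᵐ x ∂μ, f x = 0 → fderiv ℝ f x = 0 := by
  have hmeas : MeasurableSet {x | f x = 0} :=
    (isClosed_eq hf.continuous continuous_const).measurableSet
  have happrox : ApproximatesLinearOn f (0 : E →L[ℝ] E) {x | f x = 0} 0 := by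
    intro x (hx : f x = 0) y (hy : f y = 0)
    simp [hx, hy]
  have hae := happrox.norm_fderiv_sub_le μ hmeas (fderiv ℝ f)
    fun x _ ↦ (hf x).hasFDerivAt.hasFDerivWithinAt
  rw [ae_restrict_iff' hmeas] at hae
  exact hae.mono fun x hx hfx ↦ by simpa using hx hfx

lemma ae_norm_wirtingerDBar_sq_le {F : ℂ → ℂ} (hF : Differentiable ℝ F) :
    ∀ᵐ z, ‖wirtingerDBar F z‖ ^ 2 ≤ ‖wirtingerDBar F z‖ ^ 2 / ‖F z‖ ^ 2 * ‖F z‖ ^ 2 := by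
  filter_upwards [ae_fderiv_eq_zero_of_eq_zero hF] with z hz
  by_cases hFz : F z = 0
  · simp [wirtingerDBar, hz hFz]
  · exact (div_mul_cancel₀ _ (pow_ne_zero 2 (norm_ne_zero_iff.2 hFz))).ge

end UniqueContinuation

/-! ### Vanishing to infinite order in the `L²` sense -/

section VanishesInfiniteOrder

section Integrals

variable {E F G : Type*} [MeasurableSpace E] {μ : Measure E}

lemma setIntegral_ball_isBigO [PseudoMetricSpace E] [OpensMeasurableSpace E]
    [NormedAddCommGroup F] [NormedSpace ℝ F] {f : E → F} {g : E → ℝ} {x : E}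
    (hfg : f =O[𝓝 x] g) (hg₀ : ∀ y, 0 ≤ g y) (hg : IntegrableAtFilter g (𝓝 x) μ) :
    (fun r ↦ ∫ y in ball x r, f y ∂μ) =O[𝓝[>] 0] fun r ↦ ∫ y in ball x r, g y ∂μ := by
  obtain ⟨t, ht, hgt⟩ := hg
  obtain ⟨C, hC⟩ := hfg.bound
  obtain ⟨ρ, hρ, hsub⟩ := Metric.mem_nhds_iff.1 (inter_mem ht hC)
  refine .of_bound C ((eventually_lt_nhds hρ).filter_mono nhdsWithin_le_nhds |>.mono fun r hr ↦ ?_)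
  have hball : ball x r ⊆ ball x ρ := ball_subset_ball hr.le
  rw [Real.norm_of_nonneg (setIntegral_nonneg measurableSet_ball fun y _ ↦ hg₀ y),
    ← integral_const_mul]
  refine norm_integral_le_of_norm_le ((hgt.mono_set ((hball.trans hsub).trans
    Set.inter_subset_left)).const_mul C) ((ae_restrict_iff' measurableSet_ball).2 (.of_forall
    fun y hy ↦ ?_))
  exact Real.norm_of_nonneg (hg₀ y) ▸ (hsub (hball hy)).2

lemma setIntegral_ball_norm_sub_pow [NormedAddCommGroup E] [NormedSpace ℝ E]
    [FiniteDimensional ℝ E] [BorelSpace E] [μ.IsAddHaarMeasure] (x : E) (k : ℕ) {r : ℝ}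
    (hr : 0 < r) :
    ∫ y in ball x r, ‖y - x‖ ^ k ∂μ =
      r ^ (k + Module.finrank ℝ E) * ∫ y in ball (0 : E) 1, ‖y‖ ^ k ∂μ := by
  have hscale := Measure.setIntegral_comp_smul_of_pos μ (fun y : E ↦ ‖y‖ ^ k) (ball 0 1) hr
  simp only [norm_smul, Real.norm_of_nonneg hr.le, mul_pow, integral_const_mul,
    smul_unitBall_of_pos hr, smul_eq_mul] at hscale
  have hball : (fun y ↦ y - x) ⁻¹' ball 0 r = ball x r := by
    ext y
    simp only [Set.mem_preimage, mem_ball_iff_norm, sub_zero]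
  have htranslate := (measurePreserving_sub_right μ x).setIntegral_preimage_emb
    (MeasurableEquiv.subRight x).measurableEmbedding (fun y ↦ ‖y‖ ^ k) (ball 0 r)
  rw [pow_add, mul_right_comm, hscale, mul_right_comm, inv_mul_cancel₀ (by positivity), one_mul,
    ← htranslate, hball]

end Integrals

variable {f g : ℂ → ℂ} {z₀ : ℂ}

lemma vanishesInfiniteOrder_iff_isLittleO :
    VanishesInfiniteOrder f z₀ ↔ ∀ n : ℕ,
      (fun r ↦ ∫ z in ball z₀ r, ‖f z‖ ^ 2) =o[𝓝[>] 0] fun r : ℝ ↦ r ^ n := by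
  have hpos : ∀ᶠ r : ℝ in 𝓝[>] 0, 0 < r := self_mem_nhdsWithin
  have hreal (m : ℝ) : Tendsto (fun r ↦ r ^ (-m) * ∫ z in ball z₀ r, ‖f z‖ ^ 2) (𝓝[>] 0) (𝓝 0) ↔
      (fun r ↦ ∫ z in ball z₀ r, ‖f z‖ ^ 2) =o[𝓝[>] 0] fun r : ℝ ↦ r ^ m := by
    rw [Asymptotics.isLittleO_iff_tendsto'
      (hpos.mono fun r hr h ↦ ((Real.rpow_pos_of_pos hr m).ne' h).elim)]
    exact tendsto_congr' (hpos.mono fun r hr ↦ by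
      simp only [Real.rpow_neg (le_of_lt hr), div_eq_inv_mul])
  refine ⟨fun h n ↦ ?_, fun h m _ ↦ (hreal m).2 ?_⟩
  · simpa only [Real.rpow_natCast] using (hreal n).1 (h n n.cast_nonneg)
  · obtain ⟨n, hn⟩ := exists_nat_ge m
    refine (h n).trans_isBigO (.of_bound' ?_)
    filter_upwards [hpos, (eventually_lt_nhds one_pos).filter_mono nhdsWithin_le_nhds] with r hr hr₁
    rw [← Real.rpow_natCast, Real.norm_of_nonneg (Real.rpow_nonneg hr.le _),
      Real.norm_of_nonneg (Real.rpow_nonneg hr.le _)]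
    exact Real.rpow_le_rpow_of_exponent_ge hr hr₁.le hn

lemma vanishesInfiniteOrder_congr (h : f =ᶠ[𝓝 z₀] g) :
    VanishesInfiniteOrder f z₀ ↔ VanishesInfiniteOrder g z₀ := by
  obtain ⟨ρ, hρ, hfg⟩ := Metric.eventually_nhds_iff.1 h
  refine forall₂_congr fun m _ ↦ tendsto_congr' ?_
  filter_upwards [(eventually_lt_nhds hρ).filter_mono nhdsWithin_le_nhds] with r hr
  have hint : ∫ z in ball z₀ r, ‖f z‖ ^ 2 = ∫ z in ball z₀ r, ‖g z‖ ^ 2 :=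
    setIntegral_congr_fun measurableSet_ball fun z hz ↦ by
      simp only [hfg ((mem_ball.1 hz).trans hr)]
  rw [hint]

lemma setIntegral_ball_norm_sub_pow_sq_isTheta (z₀ : ℂ) (k : ℕ) :
    (fun r ↦ ∫ z in ball z₀ r, ‖(‖z - z₀‖ ^ k : ℝ)‖ ^ 2) =Θ[𝓝[>] 0]
      fun r : ℝ ↦ r ^ (k * 2 + 2) := by
  have hcont : Continuous fun z : ℂ ↦ ‖z‖ ^ (k * 2) := by fun_prop
  have hpos : 0 < ∫ z in ball (0 : ℂ) 1, ‖z‖ ^ (k * 2) := by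
    rw [setIntegral_pos_iff_support_of_nonneg_ae (.of_forall fun z ↦ pow_nonneg (norm_nonneg z) _)
      ((hcont.continuousOn.integrableOn_compact (isCompact_closedBall 0 1)).mono_set
        ball_subset_closedBall)]
    refine ((isOpen_ne.inter isOpen_ball).measure_pos volume ⟨1 / 2, ?_⟩).trans_le
      (measure_mono (Set.inter_subset_inter_left _ fun z (hz : z ≠ 0) ↦ ?_))
    · norm_num
    · exact pow_ne_zero _ (norm_ne_zero_iff.2 hz)
  have heq : (fun r ↦ ∫ z in ball z₀ r, ‖(‖z - z₀‖ ^ k : ℝ)‖ ^ 2) =ᶠ[𝓝[>] 0]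
      fun r ↦ (∫ z in ball (0 : ℂ) 1, ‖z‖ ^ (k * 2)) * r ^ (k * 2 + 2) := by
    filter_upwards [self_mem_nhdsWithin] with r hr
    simp only [norm_pow, norm_norm, ← pow_mul, setIntegral_ball_norm_sub_pow z₀ (k * 2) hr,
      finrank_real_complex, mul_comm]
  exact heq.trans_isTheta ((Asymptotics.isTheta_refl _ _).const_mul_left hpos.ne')

lemma vanishesInfiniteOrder_of_isBigO (h : ∀ k : ℕ, f =O[𝓝 z₀] fun z ↦ ‖z - z₀‖ ^ k) :
    VanishesInfiniteOrder f z₀ := by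
  refine vanishesInfiniteOrder_iff_isLittleO.2 fun n ↦ ?_
  have hcont : Continuous fun z ↦ ‖(‖z - z₀‖ ^ n : ℝ)‖ ^ 2 := by fun_prop
  have hint := setIntegral_ball_isBigO ((h n).norm_norm.pow 2) (fun z ↦ by positivity)
    (hcont.locallyIntegrable (μ := volume) z₀)
  refine (hint.trans (setIntegral_ball_norm_sub_pow_sq_isTheta z₀ n).isBigO).trans_isLittleO ?_
  exact (Asymptotics.isLittleO_pow_pow (by lia)).mono nhdsWithin_le_nhds

lemma not_vanishesInfiniteOrder_of_isBigO {k : ℕ} (h : (fun z ↦ ‖z - z₀‖ ^ k) =O[𝓝 z₀] f)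
    (hf : IntegrableAtFilter (fun z ↦ ‖f z‖ ^ 2) (𝓝 z₀)) : ¬VanishesInfiniteOrder f z₀ := by
  intro hv
  have hint := setIntegral_ball_isBigO (h.norm_norm.pow 2) (fun z ↦ by positivity) hf
  have hpos : ∀ᶠ r : ℝ in 𝓝[>] 0, r ^ (k * 2 + 2) ≠ 0 := by
    filter_upwards [self_mem_nhdsWithin] with r hr using (pow_pos hr _).ne'
  exact ((setIntegral_ball_norm_sub_pow_sq_isTheta z₀ k).symm.isBigO.trans hint).not_isLittleO
    hpos.frequently (vanishesInfiniteOrder_iff_isLittleO.1 hv _)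

end VanishesInfiniteOrder

/-! ### The quotient of `∂̄f` by `f` -/

section Quotient

lemma forall_exists_not_le_iff_not_isBigO {X E F : Type*} [TopologicalSpace X]
    [SeminormedAddCommGroup E] [SeminormedAddCommGroup F] {f : X → E} {g : X → F} {W : Set X}
    {x : X} (hW : IsOpen W) (hx : x ∈ W) :
    (∀ U, IsOpen U → x ∈ U → U ⊆ W → ∀ C : ℝ, ∃ y ∈ U, ¬ ‖f y‖ ≤ C * ‖g y‖) ↔
      ¬ f =O[𝓝 x] g := by
  refine ⟨fun h hfg ↦ ?_, fun h U hU hxU _ C ↦ ?_⟩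
  · obtain ⟨C, hC⟩ := hfg.bound
    obtain ⟨U, hUC, hU, hxU⟩ := _root_.mem_nhds_iff.1 (inter_mem hC (hW.mem_nhds hx))
    obtain ⟨y, hy, hCy⟩ := h U hU hxU (fun y hy ↦ (hUC hy).2) C
    exact hCy (hUC hy).1
  · by_contra! hC
    exact h (.of_bound C (mem_of_superset (hU.mem_nhds hxU) hC))

lemma forall_lintegral_ofReal_eq_top_iff_not_integrableAtFilter {X : Type*} [TopologicalSpace X]
    [MeasurableSpace X] [OpensMeasurableSpace X] {μ : Measure X} {h : X → ℝ} {W : Set X} {x : X}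
    (hW : IsOpen W) (hx : x ∈ W) (hm : AEStronglyMeasurable h (μ.restrict W)) (h₀ : ∀ y, 0 ≤ h y) :
    (∀ U, IsOpen U → x ∈ U → U ⊆ W → ∫⁻ y in U, ENNReal.ofReal (h y) ∂μ = ⊤) ↔
      ¬ IntegrableAtFilter h (𝓝 x) μ := by
  have hiff {U : Set X} (hU : U ⊆ W) :
      ∫⁻ y in U, ENNReal.ofReal (h y) ∂μ ≠ ⊤ ↔ IntegrableOn h U μ :=
    lintegral_ofReal_ne_top_iff_integrable (hm.mono_set hU) (.of_forall h₀)
  refine ⟨fun htop ⟨t, ht, hint⟩ ↦ ?_, fun hnot U hU hxU hUW ↦ ?_⟩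
  · obtain ⟨U, hUt, hU, hxU⟩ := _root_.mem_nhds_iff.1 (inter_mem ht (hW.mem_nhds hx))
    exact (hiff fun y hy ↦ (hUt hy).2).2 (hint.mono_set fun y hy ↦ (hUt hy).1)
      (htop U hU hxU fun y hy ↦ (hUt hy).2)
  · by_contra hfin
    exact hnot ⟨U, hU.mem_nhds hxU, (hiff hUW).1 hfin⟩

lemma integrableAtFilter_congr {X E : Type*} [MeasurableSpace X] [NormedAddCommGroup E]
    {μ : Measure X} {l : Filter X} [l.IsMeasurablyGenerated] {f g : X → E} (hfg : f =ᶠ[l] g) :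
    IntegrableAtFilter f l μ ↔ IntegrableAtFilter g l μ := by
  have himp {f g : X → E} (hfg : f =ᶠ[l] g) (h : IntegrableAtFilter f l μ) :
      IntegrableAtFilter g l μ := by
    obtain ⟨t, ht, hint⟩ := h
    obtain ⟨s, hs, hsm, hst⟩ := hfg.exists_measurable_mem
    exact ⟨s ∩ t, inter_mem hs ht, (hint.mono_set Set.inter_subset_right).congr
      (ae_restrict_of_ae_restrict_of_subset Set.inter_subset_left
        ((ae_restrict_iff' hsm).2 (.of_forall hst)))⟩
  exact ⟨himp hfg, himp hfg.symm⟩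

lemma integrableAtFilter_norm_sq_div_of_isBigO {X E F : Type*} [TopologicalSpace X]
    [MeasurableSpace X] [OpensMeasurableSpace X] [SeminormedAddCommGroup E]
    [SeminormedAddCommGroup F] {μ : Measure X} [IsLocallyFiniteMeasure μ] {f : X → E}
    {g : X → F} {x : X}
    (hm : StronglyMeasurableAtFilter (fun y ↦ ‖f y‖ ^ 2 / ‖g y‖ ^ 2) (𝓝 x) μ)
    (hfg : f =O[𝓝 x] g) : IntegrableAtFilter (fun y ↦ ‖f y‖ ^ 2 / ‖g y‖ ^ 2) (𝓝 x) μ := by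
  obtain ⟨C, hC⟩ := hfg.bound
  refine (μ.finiteAt_nhds x).integrableAtFilter hm (isBoundedUnder_of_eventually_le (a := C ^ 2)
    (hC.mono fun y hy ↦ ?_))
  rw [Function.comp_apply, Real.norm_of_nonneg (by positivity)]
  refine div_le_of_le_mul₀ (by positivity) (by positivity) ?_
  rw [← mul_pow]
  gcongr

variable {F : ℂ → ℂ} {z₀ : ℂ}

lemma aestronglyMeasurable_norm_wirtingerDBar_sq_div {W : Set ℂ} (hW : IsOpen W)
    (hF : ContDiffOn ℝ 1 F W) : AEStronglyMeasurable
      (fun z ↦ ‖wirtingerDBar F z‖ ^ 2 / ‖F z‖ ^ 2) (volume.restrict W) := by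
  have hB : ContinuousOn (wirtingerDBar F) W :=
    wirtingerDBarCLM.continuous.comp_continuousOn (hF.continuousOn_fderiv_of_isOpen hW le_rfl)
  have hnum := (hB.norm.pow 2).aemeasurable (μ := volume) hW.measurableSet
  exact (hnum.div ((hF.continuousOn.norm.pow 2).aemeasurable hW.measurableSet)).aestronglyMeasurable

lemma IsFlatAt.not_integrableAtFilter_norm_wirtingerDBar_sq_div (h : IsFlatAt F z₀)
    (hF : ContDiff ℝ ∞ F) (hne : ∃ᶠ z in 𝓝 z₀, F z ≠ 0) :
    ¬ IntegrableAtFilter (fun z ↦ ‖wirtingerDBar F z‖ ^ 2 / ‖F z‖ ^ 2) (𝓝 z₀) := fun hint ↦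
  hne ((h.eventuallyEq_zero hF hint (fun z ↦ by positivity)
    (ae_norm_wirtingerDBar_sq_le (hF.differentiable (by simp)))).mono fun z hz ↦ not_not.2 hz)

lemma isFlatAt_tfae (hF : ContDiff ℝ ∞ F) (h : IsFlatAt (wirtingerDBar F) z₀)
    (hne : ∃ᶠ z in 𝓝 z₀, F z ≠ 0) :
    [IsFlatAt F z₀, VanishesInfiniteOrder F z₀, ¬ wirtingerDBar F =O[𝓝 z₀] F,
      ¬ IntegrableAtFilter (fun z ↦ ‖wirtingerDBar F z‖ ^ 2 / ‖F z‖ ^ 2) (𝓝 z₀)].TFAE := by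
  have hlead : ¬ IsFlatAt F z₀ → ∃ k : ℕ, (fun z ↦ ‖z - z₀‖ ^ k) =O[𝓝 z₀] F := fun hflat ↦ by
    obtain ⟨k, c, hc, hO⟩ := (isFlatAt_or_isBigO_sub_leading_term h hF).resolve_left hflat
    exact ⟨k, norm_sub_pow_isBigO_of_leading_term hc hO⟩
  tfae_have 1 → 2 := fun hflat ↦ vanishesInfiniteOrder_of_isBigO (hflat.isBigO_norm_sub_pow hF)
  tfae_have 2 → 1 := not_imp_not.1 fun hflat ↦ by
    obtain ⟨k, hk⟩ := hlead hflat
    exact not_vanishesInfiniteOrder_of_isBigO hk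
      ((hF.continuous.norm.pow 2).locallyIntegrable z₀)
  tfae_have 1 → 4 := fun hflat ↦
    hflat.not_integrableAtFilter_norm_wirtingerDBar_sq_div hF hne
  have hmeas := aestronglyMeasurable_norm_wirtingerDBar_sq_div isOpen_univ
    (hF.of_le (by simp)).contDiffOn
  tfae_have 4 → 3 := mt (integrableAtFilter_norm_sq_div_of_isBigO ⟨_, univ_mem, hmeas⟩)
  tfae_have 3 → 1 := not_imp_comm.1 fun hflat ↦ by
    obtain ⟨k, hk⟩ := hlead hflat
    exact (h.isBigO_norm_sub_pow (contDiff_wirtingerDBar hF (by simp)) k).trans hk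
  tfae_finish

end Quotient

/-! ### Localization at a boundary point -/

section Localization

lemma exists_contDiff_eventuallyEq {E F : Type*} [NormedAddCommGroup E] [NormedSpace ℝ E]
    [HasContDiffBump E] [FiniteDimensional ℝ E] [NormedAddCommGroup F] [NormedSpace ℝ F]
    {f : E → F} {W : Set E} {x : E} {n : ℕ∞}
    (hf : ContDiffOn ℝ n f W) (hW : W ∈ 𝓝 x) : ∃ g, ContDiff ℝ n g ∧ g =ᶠ[𝓝 x] f := by
  obtain ⟨ρ, hρ, hρW⟩ := Metric.mem_nhds_iff.1 hW
  let χ : ContDiffBump x := ⟨ρ / 4, ρ / 2, by linarith, by linarith⟩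
  have hsub : tsupport χ ⊆ ball x ρ := by
    rw [χ.tsupport_eq]
    exact closedBall_subset_ball (half_lt_self hρ)
  refine ⟨fun y ↦ χ y • f y, contDiff_iff_contDiffAt.2 fun y ↦ ?_, ?_⟩
  · by_cases hy : y ∈ tsupport χ
    · exact χ.contDiff.contDiffAt.smul
        (hf.contDiffAt (mem_of_superset (isOpen_ball.mem_nhds (hsub hy)) hρW))
    · refine contDiffAt_const (c := 0) |>.congr_of_eventuallyEq ?_
      filter_upwards [notMem_tsupport_iff_eventuallyEq.1 hy] with w hw
      rw [hw, Pi.zero_apply, zero_smul]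
  · filter_upwards [χ.eventuallyEq_one] with y hy
    rw [hy, Pi.one_apply, one_smul]

lemma isFlatAt_of_mem_closure {E F : Type*} [NormedAddCommGroup E] [NormedSpace ℝ E]
    [NormedAddCommGroup F] [NormedSpace ℝ F] {f : E → F} {s : Set E} {x : E}
    (hf : ContDiffAt ℝ ∞ f x) (hs : IsOpen s) (hfs : Set.EqOn f 0 s) (hx : x ∈ closure s) :
    IsFlatAt f x := fun n ↦ by
  have hzero : ∀ y ∈ s, iteratedFDeriv ℝ n f y = 0 := fun y hy ↦ by
    rw [((hfs.eventuallyEq_of_mem (hs.mem_nhds hy)).iteratedFDeriv ℝ n).eq_of_nhds]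
    simp
  exact tendsto_nhds_unique_of_frequently_eq
    (hf.continuousAt_iteratedFDeriv (mod_cast le_top)).tendsto tendsto_const_nhds
    ((mem_closure_iff_frequently.1 hx).mono hzero)

lemma isFlatAt_wirtingerDBar_of_mem_closure {f : ℂ → ℂ} {s : Set ℂ} {z₀ : ℂ}
    (hf : ContDiffAt ℝ ∞ f z₀) (hs : IsOpen s) (hfs : DifferentiableOn ℂ f s)
    (hz₀ : z₀ ∈ closure s) : IsFlatAt (wirtingerDBar f) z₀ :=
  isFlatAt_of_mem_closure ((wirtingerDBarCLM.restrictScalars ℝ).contDiff.contDiffAt.comp z₀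
      (hf.fderiv_right (by simp))) hs
    (fun _ hz ↦ wirtingerDBar_eq_zero_of_differentiableAt (hfs.differentiableAt (hs.mem_nhds hz)))
    hz₀

lemma frequently_ne_zero_of_mem_closure {Ω : Set ℂ} {u : ℂ → ℂ} {z₀ : ℂ} (hΩ : IsOpen Ω)
    (hconn : IsPreconnected Ω) (hu : DifferentiableOn ℂ u Ω) (hne : ¬ Set.EqOn u 0 Ω)
    (hz₀ : z₀ ∈ closure Ω) : ∃ᶠ z in 𝓝 z₀, z ∈ Ω ∧ u z ≠ 0 :=
  fun hev ↦ by
  obtain ⟨y, hyΩ, hy⟩ :=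
    ((mem_closure_iff_frequently.1 hz₀).and_eventually hev.eventually_nhds).exists
  refine hne ((hu.analyticOnNhd hΩ).eqOn_of_preconnected_of_eventuallyEq analyticOnNhd_const
    hconn hyΩ ?_)
  filter_upwards [hy, hΩ.mem_nhds hyΩ] with z hz hzΩ
  exact not_not.1 fun h ↦ hz ⟨hzΩ, h⟩

end Localization

theorem infinite_order_characterization_general {W : Set ℂ} (hW : IsOpen W) {z₀ : ℂ} (hz₀ : z₀ ∈ W)
    {f : ℂ → ℂ} (hf : ContDiffOn ℝ ∞ f W) (hflat : IsFlatAt (wirtingerDBar f) z₀)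
    (hne : ∃ᶠ z in 𝓝 z₀, f z ≠ 0) :
    (VanishesInfiniteOrder f z₀ ↔
      ∀ U : Set ℂ, IsOpen U → z₀ ∈ U → U ⊆ W →
        ∀ C : ℝ, ∃ z ∈ U, ¬ (‖wirtingerDBar f z‖ ≤ C * ‖f z‖)) ∧
    (VanishesInfiniteOrder f z₀ ↔
      ∀ U : Set ℂ, IsOpen U → z₀ ∈ U → U ⊆ W →
        ∫⁻ z in U, ENNReal.ofReal (‖wirtingerDBar f z‖ ^ 2 / ‖f z‖ ^ 2) = ⊤) := by
  obtain ⟨F, hF, hFf⟩ := exists_contDiff_eventuallyEq hf (hW.mem_nhds hz₀)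
  have hB : wirtingerDBar F =ᶠ[𝓝 z₀] wirtingerDBar f := eventuallyEq_wirtingerDBar hFf
  have htfae := isFlatAt_tfae hF (hflat.congr hB.symm)
    ((hne.and_eventually hFf).mono fun z hz ↦ hz.2.symm ▸ hz.1)
  have hquot : (fun z ↦ ‖wirtingerDBar F z‖ ^ 2 / ‖F z‖ ^ 2) =ᶠ[𝓝 z₀]
      fun z ↦ ‖wirtingerDBar f z‖ ^ 2 / ‖f z‖ ^ 2 := by
    filter_upwards [hB, hFf] with z hBz hz
    rw [hBz, hz]
  rw [forall_exists_not_le_iff_not_isBigO hW hz₀,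
    forall_lintegral_ofReal_eq_top_iff_not_integrableAtFilter hW hz₀
      (aestronglyMeasurable_norm_wirtingerDBar_sq_div hW (hf.of_le (by simp)))
      fun z ↦ by positivity,
    ← vanishesInfiniteOrder_congr hFf, ← Asymptotics.isBigO_congr hB hFf,
    ← integrableAtFilter_congr hquot]
  exact ⟨htfae.out 1 2, htfae.out 1 3⟩

/-- Corollary 5.4: for a smooth extension `ũ` across a boundary point `z₀` of a
nonconstant holomorphic function, with `ũ(z₀) = 0`, the following are equivalent:
(1) `ũ` vanishes to infinite order at `z₀`; (2) `|∂̄ũ|/|ũ| ∉ L^∞` near `z₀`;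
(3) `|∂̄ũ|/|ũ| ∉ L²` near `z₀`. -/
theorem infinite_order_characterization
    (Ω : Set ℂ) (hΩopen : IsOpen Ω) (hΩconn : IsConnected Ω)
    (z₀ : ℂ) (hz₀ : z₀ ∈ frontier Ω)
    (u : ℂ → ℂ) (hu : DifferentiableOn ℂ u Ω)
    (hnonconst : ¬ ∃ c : ℂ, Set.EqOn u (fun _ => c) Ω)
    (W : Set ℂ) (hWopen : IsOpen W) (hz₀W : z₀ ∈ W)
    (ut : ℂ → ℂ) (hsmooth : ContDiffOn ℝ (⊤ : ℕ∞) ut W)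
    (hagree : Set.EqOn ut u (W ∩ Ω)) (hut0 : ut z₀ = 0) :
    (VanishesInfiniteOrder ut z₀ ↔
      ∀ U : Set ℂ, IsOpen U → z₀ ∈ U → U ⊆ W →
        ∀ C : ℝ, ∃ z ∈ U, ¬ (‖wirtingerDBar ut z‖ ≤ C * ‖ut z‖)) ∧
    (VanishesInfiniteOrder ut z₀ ↔
      ∀ U : Set ℂ, IsOpen U → z₀ ∈ U → U ⊆ W →
        ∫⁻ z in U, ENNReal.ofReal (‖wirtingerDBar ut z‖ ^ 2 / ‖ut z‖ ^ 2) = ⊤) := by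
  have hcl : z₀ ∈ closure Ω := frontier_subset_closure hz₀
  have hflat : IsFlatAt (wirtingerDBar ut) z₀ :=
    isFlatAt_wirtingerDBar_of_mem_closure (hsmooth.contDiffAt (hWopen.mem_nhds hz₀W))
      (hWopen.inter hΩopen) ((hu.mono Set.inter_subset_right).congr hagree)
      (hWopen.inter_closure ⟨hz₀W, hcl⟩)
  have hne_u : ∃ᶠ z in 𝓝 z₀, z ∈ Ω ∧ u z ≠ 0 :=
    frequently_ne_zero_of_mem_closure hΩopen hΩconn.isPreconnected hu
      (fun h ↦ hnonconst ⟨0, h⟩) hcl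
  have hne : ∃ᶠ z in 𝓝 z₀, ut z ≠ 0 :=
    (hne_u.and_eventually (hWopen.mem_nhds hz₀W)).mono fun z ⟨⟨hzΩ, huz⟩, hzW⟩ ↦
      hagree ⟨hzW, hzΩ⟩ ▸ huz
  exact infinite_order_characterization_general hWopen hz₀W hsmooth hflat hne
end

section
/- Let n ≥ 2 and 0 < ε < (n−1)/n. Define V on the open ball B_{1/2} = {x ∈ ℝⁿ : |x| < 1/2} by V(x) = ε·(−log|x|)^{ε−1}/|x| for x ≠ 0 (and V(0) = 0), and define u₀ on B_{1/2} by u₀(x) = exp(−(−log|x|)^ε) for x ≠ 0 and u₀(0) = 0. Then: (1) ∫_{B_{1/2}} V(x)ⁿ dv < ∞; (2) u₀ is continuous on B_{1/2} and C^∞ on B_{1/2} ∖ {0}; and (3) for every x ∈ B_{1/2} ∖ {0}, ‖fderiv u₀ x‖ = V(x)·u₀(x). -/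
/-!
Everything is radial. The profile `u r = exp (-(-log r) ^ ε)` solves `u' = V u` on `(0, 1)` with
`V r = ε (-log r) ^ (ε - 1) / r`; since the norm has derivative of norm one away from the origin,
this gives `‖∇u‖ = V u`. Continuity at the origin holds because `(-log r) ^ ε → ∞` as `r → 0`.

In dimension `d`, the radial density `r ^ (d - 1) * V r ^ d` is a constant multiple of
`(-log r) ^ ((ε - 1) d) / r`. The condition `ε < (d - 1) / d` says exactly that
`p = (ε - 1) d + 1` is negative, so `(-log r) ^ p`, which is an antiderivative up to a constant,
stays bounded near `0`.
-/

open MeasureTheory Classical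

open Filter Metric Module Set Topology

theorem norm_fderiv_comp_norm {E : Type*} [NormedAddCommGroup E] [NormedSpace ℝ E]
    [Nontrivial E] {f : ℝ → ℝ} {f' : ℝ} {x : E} (hf : HasDerivAt f f' ‖x‖)
    (hx : DifferentiableAt ℝ (fun y : E => ‖y‖) x) :
    ‖fderiv ℝ (fun y => f ‖y‖) x‖ = |f'| := by
  have hcomp : HasFDerivAt (fun y => f ‖y‖) (f' • fderiv ℝ (fun y : E => ‖y‖) x) x :=
    hf.comp_hasFDerivAt x hx.hasFDerivAt
  rw [hcomp.fderiv, norm_smul, norm_fderiv_norm hx, mul_one, Real.norm_eq_abs]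

/-- The radial profile `r ↦ ε (-log r) ^ (ε - 1) / r` of the potential `V`. Division by zero makes
its value at `0` equal to `0`, as required of `V`. -/
noncomputable def logPotential (ε r : ℝ) : ℝ :=
  ε * (-Real.log r) ^ (ε - 1) / r

/-- The radial profile `r ↦ exp (-(-log r) ^ ε)` of `u₀`, with value `0` at `0` because the
formula itself would give `exp 0 = 1` there for `ε ≠ 0`. -/
noncomputable def logSolution (ε r : ℝ) : ℝ :=
  if r = 0 then 0 else Real.exp (-(-Real.log r) ^ ε)

theorem logPotential_nonneg {ε r : ℝ} (hε : 0 ≤ ε) (hr : r ∈ Icc 0 1) : 0 ≤ logPotential ε r :=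
  div_nonneg (mul_nonneg hε (Real.rpow_nonneg (neg_nonneg.2 (Real.log_nonpos hr.1 hr.2)) _)) hr.1

theorem logPotential_nonpos {ε r : ℝ} (hε : ε ≤ 0) (hr : r ∈ Icc 0 1) : logPotential ε r ≤ 0 :=
  div_nonpos_of_nonpos_of_nonneg (mul_nonpos_of_nonpos_of_nonneg hε
    (Real.rpow_nonneg (neg_nonneg.2 (Real.log_nonpos hr.1 hr.2)) _)) hr.1

theorem logSolution_nonneg (ε r : ℝ) : 0 ≤ logSolution ε r := by
  unfold logSolution
  positivity

theorem logSolution_eventuallyEq (ε : ℝ) {r : ℝ} (hr : r ≠ 0) :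
    logSolution ε =ᶠ[𝓝 r] fun s => Real.exp (-(-Real.log s) ^ ε) := by
  filter_upwards [isOpen_ne.mem_nhds hr] with s hs
  exact if_neg hs

theorem hasDerivAt_neg_log_rpow (p : ℝ) {r : ℝ} (hr : Real.log r ≠ 0) :
    HasDerivAt (fun s => (-Real.log s) ^ p) (-logPotential p r) r := by
  have hr0 : r ≠ 0 := (Real.log_ne_zero.1 hr).1
  have h := (Real.hasDerivAt_log hr0).neg.rpow_const (p := p) (Or.inl (neg_ne_zero.2 hr))
  refine h.congr_deriv ?_
  rw [Pi.neg_apply, logPotential]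
  field_simp

theorem hasDerivAt_logSolution (ε : ℝ) {r : ℝ} (hr : Real.log r ≠ 0) :
    HasDerivAt (logSolution ε) (logPotential ε r * logSolution ε r) r := by
  have hr0 : r ≠ 0 := (Real.log_ne_zero.1 hr).1
  have h := (hasDerivAt_neg_log_rpow ε hr).neg.exp
  refine (h.congr_of_eventuallyEq (logSolution_eventuallyEq ε hr0)).congr_deriv ?_
  rw [(logSolution_eventuallyEq ε hr0).eq_of_nhds, Pi.neg_apply, neg_neg, mul_comm]

theorem contDiffAt_logSolution (ε : ℝ) {r : ℝ} {m : WithTop ℕ∞} (hr : Real.log r ≠ 0) :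
    ContDiffAt ℝ m (logSolution ε) r := by
  have hr0 : r ≠ 0 := (Real.log_ne_zero.1 hr).1
  have hlog : ContDiffAt ℝ m (fun s => -Real.log s) r := (Real.contDiffAt_log.2 hr0).neg
  exact (hlog.rpow_const_of_ne (neg_ne_zero.2 hr)).neg.exp.congr_of_eventuallyEq
    (logSolution_eventuallyEq ε hr0)

theorem tendsto_neg_log_nhdsNE_zero : Tendsto (fun r => -Real.log r) (𝓝[≠] 0) atTop :=
  tendsto_neg_atBot_atTop.comp Real.tendsto_log_nhdsNE_zero

theorem continuous_logSolution {ε : ℝ} (hε : 0 < ε) : Continuous (logSolution ε) := by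
  refine continuous_iff_continuousAt.2 fun r => ?_
  rcases eq_or_ne r 0 with rfl | hr
  · have h : Tendsto (fun s => Real.exp (-(-Real.log s) ^ ε)) (𝓝[≠] 0) (𝓝 0) :=
      Real.tendsto_exp_neg_atTop_nhds_zero.comp
        ((tendsto_rpow_atTop hε).comp tendsto_neg_log_nhdsNE_zero)
    rw [continuousAt_iff_punctured_nhds, logSolution, if_pos rfl]
    exact h.congr' (eventually_mem_nhdsWithin.mono fun s hs => (if_neg hs).symm)
  · have h : ContinuousAt (fun s => Real.exp (-(-Real.log s) ^ ε)) r :=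
      ((Real.continuousAt_log hr).neg.rpow_const (Or.inr hε.le)).neg.rexp
    exact h.congr (logSolution_eventuallyEq ε hr).symm

theorem continuousOn_neg_log_rpow_of_neg {p : ℝ} (hp : p < 0) :
    ContinuousOn (fun r => (-Real.log r) ^ p) (Ico 0 1) := by
  intro r hr
  refine ContinuousAt.continuousWithinAt ?_
  rcases hr.1.eq_or_lt with rfl | hr0
  · -- The junk values `log 0 = 0` and `0 ^ p = 0` give the right limit at `0`.
    have hzero : (-Real.log 0) ^ p = 0 := by
      rw [Real.log_zero, neg_zero, Real.zero_rpow hp.ne]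
    rw [continuousAt_iff_punctured_nhds, hzero]
    simpa only [Function.comp_def, neg_neg] using
      (tendsto_rpow_neg_atTop (neg_pos.2 hp)).comp tendsto_neg_log_nhdsNE_zero
  · exact (hasDerivAt_neg_log_rpow p (Real.log_neg hr0 hr.2).ne).continuousAt

theorem integrableOn_logPotential_of_neg {p R : ℝ} (hp : p < 0) (hR : R < 1) :
    IntegrableOn (logPotential p) (Ioo 0 R) := by
  have hcont : ContinuousOn (fun r => (-Real.log r) ^ p) (Icc 0 R) :=
    (continuousOn_neg_log_rpow_of_neg hp).mono (Icc_subset_Ico_right hR)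
  have hderiv : ∀ r ∈ Ioo 0 R, HasDerivAt (fun s => (-Real.log s) ^ p) (-logPotential p r) r :=
    fun r hr => hasDerivAt_neg_log_rpow p (Real.log_neg hr.1 (hr.2.trans hR)).ne
  have hnonneg : ∀ r ∈ Ioo 0 R, 0 ≤ -logPotential p r :=
    fun r hr => neg_nonneg.2 (logPotential_nonpos hp.le ⟨hr.1.le, (hr.2.trans hR).le⟩)
  have hint := intervalIntegral.integrableOn_deriv_of_nonneg hcont hderiv hnonneg
  simpa only [Pi.neg_def, neg_neg] using (hint.mono_set Ioo_subset_Ioc_self).neg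

theorem pow_mul_logPotential_pow {ε r : ℝ} {d : ℕ} (hd : d ≠ 0) (hr : r ∈ Ioc 0 1)
    (hp : (ε - 1) * d + 1 ≠ 0) :
    r ^ (d - 1) * logPotential ε r ^ d =
      ε ^ d / ((ε - 1) * d + 1) * logPotential ((ε - 1) * d + 1) r := by
  have hr0 : r ≠ 0 := hr.1.ne'
  have hlog : 0 ≤ -Real.log r := neg_nonneg.2 (Real.log_nonpos hr.1.le hr.2)
  obtain ⟨k, rfl⟩ := Nat.exists_eq_succ_of_ne_zero hd
  rw [logPotential, logPotential, add_sub_cancel_right, Real.rpow_mul_natCast hlog, div_pow,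
    mul_pow, Nat.succ_sub_one, Nat.succ_eq_add_one, pow_succ r]
  field_simp

theorem integrableOn_logPotential_norm_pow_finrank {E : Type*} [NormedAddCommGroup E]
    [NormedSpace ℝ E] [FiniteDimensional ℝ E] [MeasurableSpace E] [BorelSpace E] (μ : Measure E)
    [μ.IsAddHaarMeasure] {ε R : ℝ}
    (hε : (ε - 1) * finrank ℝ E + 1 < 0) (hR : R < 1) :
    IntegrableOn (fun x : E => logPotential ε ‖x‖ ^ finrank ℝ E) (ball 0 R) μ := by
  have hd : finrank ℝ E ≠ 0 := by
    intro hd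
    norm_num [hd] at hε
  have : Nontrivial E := nontrivial_of_finrank_pos (Nat.pos_of_ne_zero hd)
  refine (integrableOn_fun_norm_addHaar μ (f := fun r => logPotential ε r ^ finrank ℝ E)).2 ?_
  have hradial : IntegrableOn (fun r => ε ^ finrank ℝ E / ((ε - 1) * finrank ℝ E + 1) *
      logPotential ((ε - 1) * finrank ℝ E + 1) r) (Ioo 0 R) :=
    (integrableOn_logPotential_of_neg hε hR).const_mul _
  exact hradial.congr_fun (fun r hr =>
    (pow_mul_logPotential_pow hd ⟨hr.1, (hr.2.trans hR).le⟩ hε.ne).symm) measurableSet_Ioo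

theorem norm_fderiv_logSolution_norm {E : Type*} [NormedAddCommGroup E] [NormedSpace ℝ E]
    {ε : ℝ} {x : E} (hε : 0 ≤ ε) (hx : DifferentiableAt ℝ (fun y : E => ‖y‖) x) (hx0 : x ≠ 0)
    (hx1 : ‖x‖ < 1) :
    ‖fderiv ℝ (fun y : E => logSolution ε ‖y‖) x‖ =
      logPotential ε ‖x‖ * logSolution ε ‖x‖ := by
  have : Nontrivial E := ⟨x, 0, hx0⟩
  have hlog : Real.log ‖x‖ ≠ 0 := (Real.log_neg (norm_pos_iff.2 hx0) hx1).ne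
  rw [norm_fderiv_comp_norm (hasDerivAt_logSolution ε hlog) hx]
  exact abs_of_nonneg (mul_nonneg (logPotential_nonneg hε ⟨norm_nonneg x, hx1.le⟩)
    (logSolution_nonneg ε ‖x‖))

theorem log_potential_example_general {E : Type*} [NormedAddCommGroup E] [InnerProductSpace ℝ E]
    [FiniteDimensional ℝ E] [MeasurableSpace E] [BorelSpace E] (μ : Measure E)
    [μ.IsAddHaarMeasure] {ε R : ℝ} (hε0 : 0 < ε)
    (hε1 : ε < ((finrank ℝ E : ℝ) - 1) / finrank ℝ E) (hR : R < 1) :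
    IntegrableOn (fun x : E => logPotential ε ‖x‖ ^ finrank ℝ E) (ball 0 R) μ ∧
    ContinuousOn (fun x : E => logSolution ε ‖x‖) (ball 0 R) ∧
    ContDiffOn ℝ (⊤ : ℕ∞) (fun x : E => logSolution ε ‖x‖) (ball 0 R \ {0}) ∧
    ∀ x ∈ ball (0 : E) R \ {0},
      ‖fderiv ℝ (fun y : E => logSolution ε ‖y‖) x‖ =
        logPotential ε ‖x‖ * logSolution ε ‖x‖ := by
  have hnorm_lt : ∀ x ∈ ball (0 : E) R, ‖x‖ < 1 := fun x hx => (mem_ball_zero_iff.1 hx).trans hR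
  have hexp : (ε - 1) * finrank ℝ E + 1 < 0 := by
    rcases (finrank ℝ E).eq_zero_or_pos with hd | hd
    · norm_num [hd] at hε1
      linarith
    · rw [lt_div_iff₀ (Nat.cast_pos.2 hd)] at hε1
      linarith
  refine ⟨integrableOn_logPotential_norm_pow_finrank μ hexp hR,
    ((continuous_logSolution hε0).comp continuous_norm).continuousOn,
    fun x hx => ?_, fun x hx => ?_⟩
  · have hlog : Real.log ‖x‖ ≠ 0 := (Real.log_neg (norm_pos_iff.2 hx.2) (hnorm_lt x hx.1)).ne
    exact ((contDiffAt_logSolution ε hlog).comp x (contDiffAt_norm ℝ hx.2)).contDiffWithinAt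
  · have hdiff : DifferentiableAt ℝ (fun y : E => ‖y‖) x :=
      (contDiffAt_norm ℝ hx.2).differentiableAt one_ne_zero
    exact norm_fderiv_logSolution_norm hε0.le hdiff hx.2 (hnorm_lt x hx.1)

/-- Example 2.4: for `0 < ε < (n−1)/n`, the potential
`V(x) = ε(−log|x|)^{ε−1}/|x|` is in `Lⁿ(B_{1/2})` and the function
`u₀(x) = exp(−(−log|x|)^ε)` (with `u₀(0) = 0`) is continuous on `B_{1/2}`,
smooth away from the origin, and satisfies `|∇u₀| = V·u₀` off the origin. -/
theorem log_potential_example (n : ℕ) (hn : 2 ≤ n)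
    (ε : ℝ) (hε0 : 0 < ε) (hε1 : ε < ((n : ℝ) - 1) / n)
    (V u₀ : EuclideanSpace ℝ (Fin n) → ℝ)
    (hV : ∀ x : EuclideanSpace ℝ (Fin n),
      V x = if x = 0 then 0 else ε * (-Real.log ‖x‖) ^ (ε - 1) / ‖x‖)
    (hu : ∀ x : EuclideanSpace ℝ (Fin n),
      u₀ x = if x = 0 then 0 else Real.exp (-(-Real.log ‖x‖) ^ ε)) :
    IntegrableOn (fun x => V x ^ n) (Metric.ball 0 (1/2)) volume ∧
    ContinuousOn u₀ (Metric.ball 0 (1/2)) ∧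
    ContDiffOn ℝ (⊤ : ℕ∞) u₀ (Metric.ball 0 (1/2) \ {0}) ∧
    ∀ x ∈ Metric.ball (0 : EuclideanSpace ℝ (Fin n)) (1/2) \ {0},
      ‖fderiv ℝ u₀ x‖ = V x * u₀ x := by
  obtain rfl : V = fun x => logPotential ε ‖x‖ := by
    ext x
    by_cases hx : x = 0 <;> simp [hV, hx, logPotential]
  obtain rfl : u₀ = fun x => logSolution ε ‖x‖ := by
    ext x
    simp only [hu, logSolution, norm_eq_zero]
  simpa only [finrank_euclideanSpace_fin] using log_potential_example_general
    (E := EuclideanSpace ℝ (Fin n)) volume hε0 (by simpa using hε1) one_half_lt_one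
end
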